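/- arXiv:1208.6589 — 4 statements merged into one kernel-verified Lean document; each statement's English description precedes it below -/
import Mathlib

section
/- Suppose A ∈ M_{N×N}(ℂ) is invertible and both A and A^{-1} have bandwidth w ≥ 1. Then there exist L ≤ 2w(2w+1) and matrices F_1, …, F_L ∈ M_{N×N}(ℂ), each block diagonal with blocks of size at most 2, such that A = F_1 F_2 ⋯ F_L. -/
/-!
Let `D_k` be the projection onto the first `2wk` coordinates and `E_k = A⁻¹ D_k A`. As `A` and
`A⁻¹` are banded, `E_k` differs from `D_k` only in the rows and columns at distance at most `w` from
the `k`-th cut, that is, within the `k`-th block of a partition into intervals of length `2w` with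
the cuts at their midpoints. Inside this block both are idempotents of the same rank, hence
similar, and the similarities for different `k` act on different blocks: together they form one
block diagonal `C` with `C E_k = D_k C` for all `k`. Then `B = A C⁻¹` commutes with every `D_k`, so
`A = B C` with `B` block diagonal for the partition at the cuts.

It remains to factor an invertible `m × m` block, `m = 2w`, into at most `3m - 3` layers. A layer
can exchange neighbouring rows and subtract a multiple of one from the other. Parallel Gaussian
elimination clears the entries below the antidiagonal in `2m - 3` rounds. Odd-even transposition
sort then puts the rows in reverse order in `m` rounds; every pair of rows meets exactly once, and
this exchange clears one of the remaining off-diagonal entries. This makes `2(6w - 3)` layers in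
all, which is at most `2w(2w + 1)`.
-/

/-- A matrix `F` is block diagonal with blocks of size at most 2: there is a set `S`
of (0-based) positions, containing no two consecutive integers, such that
`F i j = 0` whenever `i ≠ j` and `{i, j} ≠ {k, k+1}` for every `k ∈ S`. -/
def BlockDiag2 {N : ℕ} (F : Matrix (Fin N) (Fin N) ℂ) : Prop :=
  ∃ S : Set ℕ, (∀ k ∈ S, k + 1 < N) ∧ (∀ k ∈ S, k + 1 ∉ S) ∧
    ∀ i j : Fin N, i ≠ j →
      (∀ k ∈ S, ¬(((i : ℕ) = k ∧ (j : ℕ) = k + 1) ∨ ((i : ℕ) = k + 1 ∧ (j : ℕ) = k))) →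
      F i j = 0

open Matrix
open scoped Pointwise

section Layers

variable {ι R : Type*} [LinearOrder ι]

/-- An involution of a linear order that moves every element by at most one place, encoding a
set of pairwise disjoint pairs of neighbours. -/
structure IsNeighborPairing (τ : ι → ι) : Prop where
  involutive : Function.Involutive τ
  covBy : ∀ ⦃i⦄, i < τ i → i ⋖ τ i

theorem isNeighborPairing_id : IsNeighborPairing (id : ι → ι) :=
  ⟨fun _ => rfl, fun _ h => (lt_irrefl _ h).elim⟩

theorem IsNeighborPairing.ite {τ : ι → ι} (hτ : IsNeighborPairing τ) {P : ι → Prop}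
    [DecidablePred P] (hP : ∀ i, P (τ i) ↔ P i) :
    IsNeighborPairing fun i => if P i then τ i else i where
  involutive i := by
    by_cases h : P i <;> simp [h, hP, hτ.involutive i]
  covBy i h := by
    by_cases hi : P i
    · simp only [hi, if_true] at h ⊢
      exact hτ.covBy h
    · simp [hi] at h

theorem IsNeighborPairing.le_succ {m : ℕ} {τ : Fin m → Fin m} (hτ : IsNeighborPairing τ)
    (i : Fin m) : (τ i : ℕ) ≤ i + 1 := by
  by_contra! h
  have hi : i < τ i := by rw [Fin.lt_def]; omega
  have h' : (⟨i + 1, by omega⟩ : Fin m) < τ i := by rw [Fin.lt_def]; exact h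
  exact (hτ.covBy hi).2 (by rw [Fin.lt_def]; exact Nat.lt_succ_self _) h'

theorem IsNeighborPairing.le_succ' {m : ℕ} {τ : Fin m → Fin m} (hτ : IsNeighborPairing τ)
    (i : Fin m) : (i : ℕ) ≤ τ i + 1 := by
  simpa only [hτ.involutive i] using hτ.le_succ (τ i)

theorem IsNeighborPairing.lt_of_map_lt_map {m : ℕ} {τ : Fin m → Fin m} (hτ : IsNeighborPairing τ)
    {p q : Fin m} (h : τ q < τ p) (hne : τ q ≠ p) : q < p := by
  have hqp : (q : ℕ) ≠ p := fun hqp => h.ne (congrArg τ (Fin.ext hqp))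
  have hp := hτ.le_succ p
  have hq := hτ.le_succ' q
  rw [Ne, Fin.ext_iff] at hne
  rw [Fin.lt_def] at h ⊢
  omega

/-- The block diagonal matrices with blocks of size at most 2, over an arbitrary linearly ordered
index type: the nontrivial blocks sit at the pairs of some neighbour pairing. -/
def layers (ι R : Type*) [LinearOrder ι] [Zero R] : Set (Matrix ι ι R) :=
  {F | ∃ τ, IsNeighborPairing τ ∧ ∀ i j, j ≠ i → j ≠ τ i → F i j = 0}

theorem blockDiag2_of_mem_layers {N : ℕ} {F : Matrix (Fin N) (Fin N) ℂ}
    (hF : F ∈ layers (Fin N) ℂ) : BlockDiag2 F := by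
  obtain ⟨τ, hτ, h⟩ := hF
  refine ⟨{k | ∃ i : Fin N, (i : ℕ) = k ∧ (τ i : ℕ) = k + 1}, ?_, ?_, ?_⟩
  · rintro k ⟨i, -, hi⟩
    exact hi ▸ (τ i).isLt
  · rintro k ⟨i, hik, hi⟩ ⟨j, hjk, hj⟩
    obtain rfl : j = τ i := Fin.ext (hjk.trans hi.symm)
    rw [hτ.involutive i] at hj
    omega
  · intro i j hij hS
    refine h i j hij.symm fun hj => ?_
    have hne : (i : ℕ) ≠ j := Fin.val_ne_of_ne hij
    have h₁ := hτ.le_succ i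
    have h₂ := hτ.le_succ' i
    rw [← hj] at h₁ h₂
    rcases hne.lt_or_gt with hlt | hlt
    · exact hS i ⟨i, rfl, by rw [← hj]; omega⟩ (Or.inl ⟨rfl, by omega⟩)
    · exact hS j ⟨j, rfl, by rw [hj, hτ.involutive i]; omega⟩ (Or.inr ⟨by omega, rfl⟩)

theorem diagonal_mem_layers [Zero R] (d : ι → R) : diagonal d ∈ layers ι R :=
  ⟨id, isNeighborPairing_id, fun _ _ h _ => diagonal_apply_ne' d h⟩

variable [Semiring R]

theorem one_mem_layers : (1 : Matrix ι ι R) ∈ layers ι R :=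
  diagonal_mem_layers _

variable [Fintype ι]

theorem layers_pow_mono {k l : ℕ} (h : k ≤ l) : layers ι R ^ k ⊆ layers ι R ^ l :=
  Set.pow_subset_pow_right one_mem_layers h

theorem mul_diagonal_mem_layers {F : Matrix ι ι R} (hF : F ∈ layers ι R) (d : ι → R) :
    F * diagonal d ∈ layers ι R := by
  obtain ⟨τ, hτ, h⟩ := hF
  refine ⟨τ, hτ, fun i j hij hj => ?_⟩
  rw [mul_diagonal, h i j hij hj, zero_mul]

theorem mul_diagonal_mem_layers_pow {k : ℕ} (hk : k ≠ 0) {M : Matrix ι ι R}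
    (hM : M ∈ layers ι R ^ k) (d : ι → R) : M * diagonal d ∈ layers ι R ^ k := by
  obtain ⟨k, rfl⟩ := Nat.exists_eq_succ_of_ne_zero hk
  rw [pow_succ] at hM ⊢
  obtain ⟨G, hG, F, hF, rfl⟩ := Set.mem_mul.1 hM
  rw [mul_assoc]
  exact Set.mul_mem_mul hG (mul_diagonal_mem_layers hF d)

end Layers

section RowExchange

variable {ι R : Type*} [LinearOrder ι] [Ring R]

/-- Exchange the rows paired by `τ`, subtracting from each row that moves down a multiple of the row
that moves up: the rows `x, y` at positions `τ i ⋖ i` become `y, x - c i • y`. -/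
def rowExchange (τ : ι → ι) (c : ι → R) (X : Matrix ι ι R) : Matrix ι ι R :=
  of fun i j => if τ i < i then X (τ i) j - c i * X i j else X (τ i) j

theorem exists_eq_layer_mul_rowExchange [Fintype ι] {τ : ι → ι} (hτ : IsNeighborPairing τ)
    (c : ι → R) (X : Matrix ι ι R) : ∃ F ∈ layers ι R, X = F * rowExchange τ c X := by
  refine ⟨diagonal (fun i => if i < τ i then c (τ i) else 0) + (1 : Matrix ι ι R).submatrix τ id,
    ⟨τ, hτ, fun i j hi hj => ?_⟩, ?_⟩
  · rw [Matrix.add_apply, diagonal_apply_ne' _ hi, submatrix_apply, id, one_apply_ne' hj, add_zero]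
  · have hperm : (1 : Matrix ι ι R).submatrix τ id * rowExchange τ c X =
        (rowExchange τ c X).submatrix τ id := by
      ext i j
      simp [mul_apply, one_apply]
    ext i j
    rw [add_mul, hperm, Matrix.add_apply, diagonal_mul]
    simp only [rowExchange, of_apply, submatrix_apply, id, hτ.involutive i]
    split_ifs with h₁ h₂ h₂ <;> first | simp | exact (lt_asymm h₁ h₂).elim

theorem rowExchange_apply_of_lt {τ : ι → ι} (hτ : IsNeighborPairing τ) (c : ι → R)
    (X : Matrix ι ι R) {i : ι} (hi : i < τ i) (j : ι) :
    rowExchange τ c X (τ i) j = X i j - c (τ i) * X (τ i) j := by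
  simp [rowExchange, hτ.involutive i, hi]

theorem rowExchange_apply_of_not_lt {τ : ι → ι} (hτ : IsNeighborPairing τ) (c : ι → R)
    (X : Matrix ι ι R) {i : ι} (hi : ¬i < τ i) (j : ι) :
    rowExchange τ c X (τ i) j = X i j := by
  simp [rowExchange, hτ.involutive i, hi]

end RowExchange

section Elimination

variable {m : ℕ}

/-- The pairing of `Fin m` that joins `i` to `i + 1` for every `i` with the parity of `t`. -/
def brick (t : ℕ) (i : Fin m) : Fin m :=
  if Even (i + t : ℕ) then ⟨min (i + 1) (m - 1), by omega⟩ else ⟨i - 1, by omega⟩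

theorem val_brick (t : ℕ) (i : Fin m) :
    (brick t i : ℕ) = if ((i : ℕ) + t) % 2 = 0 then min ((i : ℕ) + 1) (m - 1) else i - 1 := by
  rw [brick, apply_ite Fin.val]
  simp only [Nat.even_iff]

theorem isNeighborPairing_brick (t : ℕ) : IsNeighborPairing (brick t : Fin m → Fin m) where
  involutive i := by
    have h₁ := val_brick t i
    have h₂ := val_brick t (brick t i)
    rw [Fin.ext_iff]
    split_ifs at h₁ h₂ <;> omega
  covBy i hi := by
    have h := val_brick t i
    rw [Fin.covBy_iff, Nat.covBy_iff_add_one_eq]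
    rw [Fin.lt_def] at hi
    split_ifs at h <;> omega

variable {K : Type*} [Field K]

/-- The shape reached after `t` rounds of parallel elimination below the antidiagonal, in which
the entry at `(i, j)` is cleared in round `3 * m - 2 - (i + 2 * j)`. -/
def IsClearedBy (t : ℕ) (X : Matrix (Fin m) (Fin m) K) : Prop :=
  ∀ i j : Fin m, m ≤ (i + j : ℕ) → 3 * m ≤ t + i + 2 * j + 2 → X i j = 0

theorem exists_multiplier (τ : Fin m → Fin m) (s : ℕ) (X : Matrix (Fin m) (Fin m) K) :
    ∃ c : Fin m → K, ∀ i j : Fin m, (i + 2 * j : ℕ) = s → X i j ≠ 0 →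
      X (τ i) j - c i * X i j = 0 := by
  have (i : Fin m) : ∃ c : K, ∀ j : Fin m, (i + 2 * j : ℕ) = s → X i j ≠ 0 →
      X (τ i) j - c * X i j = 0 := by
    by_cases h : ∃ j₀ : Fin m, (i + 2 * j₀ : ℕ) = s
    · obtain ⟨j₀, h₀⟩ := h
      refine ⟨X (τ i) j₀ / X i j₀, fun j hj hX => ?_⟩
      obtain rfl : j = j₀ := Fin.ext (by omega)
      rw [div_mul_cancel₀ _ hX, sub_self]
    · exact ⟨0, fun j hj => (h ⟨j, hj⟩).elim⟩
  exact ⟨fun i => (this i).choose, fun i => (this i).choose_spec⟩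

theorem IsClearedBy.exists_succ {t : ℕ} {X : Matrix (Fin m) (Fin m) K} (hX : IsClearedBy t X) :
    ∃ F ∈ layers (Fin m) K, ∃ Y, X = F * Y ∧ IsClearedBy (t + 1) Y := by
  classical
  set σ : Fin m → Fin m := brick (m + t)
  have hσ : IsNeighborPairing σ := isNeighborPairing_brick _
  -- A pair is exchanged only if its lower row has an entry to be cleared in this round.
  let Q (i : Fin m) : Prop := ∃ j : Fin m, m ≤ (i + j : ℕ) ∧ (i + 2 * j : ℕ) = 3 * m - 3 - t ∧
    X i j ≠ 0
  let P (i : Fin m) : Prop := Q (max i (σ i))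
  have hP (i) : P (σ i) ↔ P i := by simp only [P, hσ.involutive i, max_comm]
  obtain ⟨c, hc⟩ := exists_multiplier σ (3 * m - 3 - t) X
  obtain ⟨F, hF, hFX⟩ := exists_eq_layer_mul_rowExchange (hσ.ite hP) c X
  have hlower (i j : Fin m) (hij : m ≤ (i + j : ℕ)) (hs : (i + 2 * j : ℕ) = 3 * m - 3 - t) :
      σ i < i := by
    rw [Fin.lt_def, val_brick]
    split_ifs <;> omega
  refine ⟨F, hF, _, hFX, fun i j hij ht => ?_⟩
  have hσi := hσ.le_succ' i
  by_cases hi : P i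
  · simp only [rowExchange, of_apply, if_pos hi]
    split_ifs with hlt
    · obtain ⟨j₀, hj₀, hs, hne⟩ : Q i := by simpa only [P, max_eq_left hlt.le] using hi
      by_cases hj : j = j₀
      · exact hj ▸ hc i j₀ hs hne
      · rw [Fin.ext_iff] at hj
        rw [Fin.lt_def] at hlt
        rw [hX i j hij (by omega), hX (σ i) j (by omega) (by omega), mul_zero, sub_zero]
    · have hgt : i < σ i := by
        by_contra hge
        obtain ⟨j₀, hj₀, hs, -⟩ : Q i := by simpa only [P, max_eq_left (not_lt.1 hge)] using hi
        exact hlt (hlower i j₀ hj₀ hs)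
      rw [Fin.lt_def] at hgt
      exact hX (σ i) j (by omega) (by omega)
  · simp only [rowExchange, of_apply, if_neg hi, lt_irrefl, if_false]
    by_contra hne
    have hs : (i + 2 * j : ℕ) = 3 * m - 3 - t := by
      by_contra hs
      exact hne (hX i j hij (by omega))
    refine hi ?_
    simp only [P, max_eq_left (hlower i j hij hs).le]
    exact ⟨j, hij, hs, hne⟩

theorem exists_eq_mul_isClearedBy (M : Matrix (Fin m) (Fin m) K) (t : ℕ) :
    ∃ G ∈ layers (Fin m) K ^ t, ∃ X, M = G * X ∧ IsClearedBy t X := by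
  induction t with
  | zero => exact ⟨1, by simp, M, (one_mul M).symm, fun i j _ _ => by omega⟩
  | succ t ih =>
    obtain ⟨G, hG, X, rfl, hX⟩ := ih
    obtain ⟨F, hF, Y, rfl, hY⟩ := hX.exists_succ
    exact ⟨G * F, pow_succ (layers (Fin m) K) t ▸ Set.mul_mem_mul hG hF, Y, (mul_assoc _ _ _).symm,
      hY⟩

/-- The shape of a lower triangular matrix with nonzero diagonal after its row `a` has been moved
to position `ρ a`, and after the entries in column `j` of the rows below row `j` have been
cleared. -/
structure IsPermutedLower (ρ : Equiv.Perm (Fin m)) (Z : Matrix (Fin m) (Fin m) K) : Prop where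
  ne_zero : ∀ a, Z (ρ a) a ≠ 0
  eq_zero : ∀ ⦃a j⦄, a < j ∨ ρ j < ρ a → Z (ρ a) j = 0

theorem IsPermutedLower.exists_exchange {ρ : Equiv.Perm (Fin m)} {Z : Matrix (Fin m) (Fin m) K}
    (hZ : IsPermutedLower ρ Z) {τ : Fin m → Fin m} (hτ : IsNeighborPairing τ)
    (hinv : ∀ a b, ρ b = τ (ρ a) → ρ a < ρ b → b < a) :
    ∃ F ∈ layers (Fin m) K, ∃ Y, Z = F * Y ∧
      IsPermutedLower (ρ.trans hτ.involutive.toPerm) Y := by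
  set c : Fin m → K := fun p => Z (τ p) (ρ.symm p) / Z p (ρ.symm p)
  obtain ⟨F, hF, hFZ⟩ := exists_eq_layer_mul_rowExchange hτ c Z
  refine ⟨F, hF, _, hFZ, fun a => ?_, fun a j haj => ?_⟩
  · change rowExchange τ c Z (τ (ρ a)) a ≠ 0
    by_cases ha : ρ a < τ (ρ a)
    · obtain ⟨b, hb⟩ := ρ.surjective (τ (ρ a))
      have hba : b < a := hinv a b hb (hb ▸ ha)
      rw [rowExchange_apply_of_lt hτ c Z ha, ← hb, hZ.eq_zero (Or.inl hba), mul_zero, sub_zero]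
      exact hZ.ne_zero a
    · exact rowExchange_apply_of_not_lt hτ c Z ha a ▸ hZ.ne_zero a
  · change a < j ∨ τ (ρ j) < τ (ρ a) at haj
    change rowExchange τ c Z (τ (ρ a)) j = 0
    by_cases ha : ρ a < τ (ρ a)
    · obtain ⟨b, hb⟩ := ρ.surjective (τ (ρ a))
      have hτb : τ (ρ b) = ρ a := by rw [hb, hτ.involutive]
      rw [rowExchange_apply_of_lt hτ c Z ha, ← hb]
      by_cases hjb : j = b
      · simp only [c, hjb, hτb, Equiv.symm_apply_apply]
        rw [div_mul_cancel₀ _ (hZ.ne_zero b), sub_self]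
      · have hτj : τ (ρ j) ≠ ρ a := fun h =>
          hjb (ρ.injective (hτ.involutive.injective (h.trans hτb.symm)))
        have hja : a < j ∨ ρ j < ρ a := haj.imp_right fun h => hτ.lt_of_map_lt_map h hτj
        have hba : b < a := hinv a b hb (hb ▸ ha)
        have hjb : b < j ∨ ρ j < ρ b := hja.imp hba.trans fun h => hb ▸ h.trans ha
        rw [hZ.eq_zero hja, hZ.eq_zero hjb, mul_zero, sub_zero]
    · rw [rowExchange_apply_of_not_lt hτ c Z ha]
      exact hZ.eq_zero (haj.imp_right fun h =>
        hτ.lt_of_map_lt_map h (h.trans_le (not_lt.1 ha)).ne)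

/-- The positions of the rows after `t` rounds of odd-even transposition sort, started on rows in
reverse order. -/
def oddEvenSort (m : ℕ) : ℕ → Equiv.Perm (Fin m)
  | 0 => Fin.revPerm
  | t + 1 => (oddEvenSort m t).trans (isNeighborPairing_brick t).involutive.toPerm

-- Each row travels in one direction until it is reflected at an end, so two rows meet only once.
theorem val_oddEvenSort {t : ℕ} (ht : t ≤ m) (a : Fin m) :
    (oddEvenSort m t a : ℕ) = if (a.rev : ℕ) % 2 = 0
      then min (a.rev + t) (2 * m - 1 - a.rev - t) else max (a.rev - t) (t - a.rev - 1) := by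
  induction t with
  | zero =>
    have := a.rev.isLt
    simp only [oddEvenSort, Fin.revPerm_apply]
    split_ifs <;> omega
  | succ t ih =>
    have := a.rev.isLt
    have hv := val_brick t (oddEvenSort m t a)
    rw [ih (by omega)] at hv
    change (brick t (oddEvenSort m t a) : ℕ) = _
    rw [hv]
    split_ifs <;> omega

theorem oddEvenSort_self : oddEvenSort m m = Equiv.refl (Fin m) := by
  ext a
  rw [val_oddEvenSort le_rfl, Equiv.refl_apply]
  have := a.val_rev
  split_ifs <;> omega

theorem oddEvenSort_inversion {t : ℕ} (ht : t < m) {a b : Fin m}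
    (hb : oddEvenSort m t b = brick t (oddEvenSort m t a))
    (hab : oddEvenSort m t a < oddEvenSort m t b) : b < a := by
  have h := val_brick t (oddEvenSort m t a)
  rw [← hb, val_oddEvenSort ht.le a, val_oddEvenSort ht.le b] at h
  rw [Fin.lt_def, val_oddEvenSort ht.le a, val_oddEvenSort ht.le b] at hab
  rw [← Fin.rev_lt_rev, Fin.lt_def]
  have := a.rev.isLt
  have := b.rev.isLt
  split_ifs at h hab <;> omega

theorem IsPermutedLower.exists_eq_mul_oddEvenSort {Z : Matrix (Fin m) (Fin m) K}
    (hZ : IsPermutedLower Fin.revPerm Z) {t : ℕ} (ht : t ≤ m) :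
    ∃ G ∈ layers (Fin m) K ^ t, ∃ Y, Z = G * Y ∧ IsPermutedLower (oddEvenSort m t) Y := by
  induction t with
  | zero => exact ⟨1, by simp, Z, (one_mul Z).symm, hZ⟩
  | succ t ih =>
    obtain ⟨G, hG, X, rfl, hX⟩ := ih (by omega)
    obtain ⟨F, hF, Y, rfl, hY⟩ := hX.exists_exchange (isNeighborPairing_brick t)
      fun a b => oddEvenSort_inversion (by omega)
    exact ⟨G * F, pow_succ (layers (Fin m) K) t ▸ Set.mul_mem_mul hG hF, Y, (mul_assoc _ _ _).symm,
      hY⟩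

theorem IsClearedBy.isPermutedLower {t : ℕ} (ht : 2 * m ≤ t + 3)
    {X : Matrix (Fin m) (Fin m) K} (hX : IsClearedBy t X) (hunit : IsUnit X) :
    IsPermutedLower Fin.revPerm X := by
  have hzero (a j : Fin m) (haj : a < j) : X a.rev j = 0 := by
    rw [Fin.lt_def] at haj
    have := a.val_rev
    exact hX a.rev j (by omega) (by omega)
  have hlower : (X.submatrix Fin.revPerm id).IsLowerTriangular := fun i j hij => hzero i j hij
  have hdet : (X.submatrix Fin.revPerm id).det ≠ 0 := by
    rw [det_permute]
    exact mul_ne_zero ((Equiv.Perm.sign Fin.revPerm).isUnit.map (Int.castRingHom K)).ne_zero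
      ((isUnit_iff_isUnit_det X).1 hunit).ne_zero
  rw [det_of_isLowerTriangular _ hlower, Finset.prod_ne_zero_iff] at hdet
  exact ⟨fun a => hdet a (Finset.mem_univ a),
    fun a j haj => hzero a j (haj.elim id Fin.rev_lt_rev.1)⟩

theorem IsPermutedLower.eq_diagonal {Y : Matrix (Fin m) (Fin m) K}
    (hY : IsPermutedLower (Equiv.refl _) Y) : Y = diagonal Y.diag := by
  ext i j
  rcases eq_or_ne i j with rfl | hij
  · rw [diagonal_apply_eq, diag_apply]
  · rw [diagonal_apply_ne _ hij]
    exact hY.eq_zero hij.lt_or_gt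

theorem mem_layers_pow_fin {k : ℕ} (hk : k ≠ 0) (hm : 3 * m ≤ k + 3)
    {M : Matrix (Fin m) (Fin m) K} (hM : IsUnit M) : M ∈ layers (Fin m) K ^ k := by
  obtain ⟨G, hG, X, rfl, hX⟩ := exists_eq_mul_isClearedBy M (2 * m - 3)
  have hXunit : IsUnit X := by
    rw [isUnit_iff_isUnit_det, det_mul] at hM
    exact (isUnit_iff_isUnit_det X).2 (isUnit_of_mul_isUnit_right hM)
  obtain ⟨H, hH, Y, rfl, hY⟩ :=
    (hX.isPermutedLower (by omega) hXunit).exists_eq_mul_oddEvenSort le_rfl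
  rw [oddEvenSort_self] at hY
  rw [hY.eq_diagonal, ← mul_assoc]
  refine mul_diagonal_mem_layers_pow hk ?_ _
  refine layers_pow_mono (by omega : 2 * m - 3 + m ≤ k) ?_
  exact pow_add (layers (Fin m) K) _ _ ▸ Set.mul_mem_mul hG hH

end Elimination

section Blocks

variable {ι κ R : Type*}

/-- `M` is block diagonal for the partition of the indices into the fibres of `β`. -/
def IsBlockDiagonal [Zero R] (β : ι → κ) (M : Matrix ι ι R) : Prop :=
  ∀ ⦃i j⦄, β i ≠ β j → M i j = 0

theorem isBlockDiagonal_diagonal [DecidableEq ι] [Zero R] (β : ι → κ) (d : ι → R) :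
    IsBlockDiagonal β (diagonal d) :=
  fun _ _ hij => diagonal_apply_ne d fun h => hij (congrArg β h)

/-- The block diagonal matrix with given blocks on the fibres of `β`. -/
def glue [DecidableEq ι] [Fintype ι] [DecidableEq κ] [Fintype κ] [Semiring R] (β : ι → κ) :
    (∀ k, Matrix {i // β i = k} {i // β i = k} R) →+* Matrix ι ι R :=
  (reindexRingEquiv R (Equiv.sigmaFiberEquiv β)).toRingHom.comp
    (blockDiagonal'RingHom (fun k => {i // β i = k}) R)

section Glue

variable [DecidableEq ι] [Fintype ι] [DecidableEq κ] [Fintype κ] [Semiring R] {β : ι → κ}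

theorem glue_apply (f : ∀ k, Matrix {i // β i = k} {i // β i = k} R) {k : κ}
    (i j : {i // β i = k}) : glue β f i j = f k i j := by
  obtain ⟨i, rfl⟩ := i
  obtain ⟨j, hj⟩ := j
  change blockDiagonal' f ⟨β i, i, rfl⟩ ⟨β j, j, rfl⟩ = _
  rw [blockDiagonal'_apply, dif_pos hj.symm]
  congr 1
  rw [cast_eq_iff_heq]
  congr!

theorem glue_injective : Function.Injective (glue (R := R) β) := fun f g hfg => by
  ext k i j
  rw [← glue_apply f, ← glue_apply g, hfg]

theorem isBlockDiagonal_glue (f : ∀ k, Matrix {i // β i = k} {i // β i = k} R) :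
    IsBlockDiagonal β (glue β f) :=
  fun i j hij => blockDiagonal'_apply_ne f ⟨i, rfl⟩ ⟨j, rfl⟩ hij

theorem IsBlockDiagonal.glue_toSquareBlock {M : Matrix ι ι R} (hM : IsBlockDiagonal β M) :
    glue β (M.toSquareBlock β) = M := by
  ext i j
  by_cases hij : β i = β j
  · exact glue_apply (M.toSquareBlock β) (⟨i, hij⟩ : {i // β i = β j}) ⟨j, rfl⟩
  · rw [isBlockDiagonal_glue _ hij, hM hij]

end Glue

theorem IsBlockDiagonal.isIdempotentElem_toSquareBlock [Fintype ι] [DecidableEq κ] [Finite κ]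
    [Semiring R] {β : ι → κ} {M : Matrix ι ι R} (hM : IsBlockDiagonal β M)
    (h : IsIdempotentElem M) (k : κ) : IsIdempotentElem (M.toSquareBlock β k) := by
  classical
  have := Fintype.ofFinite κ
  have hmul : M.toSquareBlock β * M.toSquareBlock β = M.toSquareBlock β :=
    glue_injective (by rw [map_mul, hM.glue_toSquareBlock, h.eq])
  exact congrFun hmul k

theorem IsBlockDiagonal.isUnit_toSquareBlock [DecidableEq ι] [Fintype ι] [LinearOrder κ]
    [Finite κ] [CommRing R] {β : ι → κ} {M : Matrix ι ι R} (hM : IsBlockDiagonal β M)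
    (hunit : IsUnit M) (k : κ) : IsUnit (M.toSquareBlock β k) := by
  have := Fintype.ofFinite κ
  have hdet : M.det = ∏ k, (M.toSquareBlock β k).det :=
    BlockTriangular.det_fintype fun i j hij => hM hij.ne'
  rw [isUnit_iff_isUnit_det, hdet, IsUnit.prod_univ_iff] at hunit
  exact (isUnit_iff_isUnit_det _).2 (hunit k)

section Layers

variable [LinearOrder ι]

theorem glue_mem_layers [Fintype ι] [PartialOrder κ] [DecidableEq κ] [Fintype κ] [Semiring R]
    {β : ι → κ} (hβ : Monotone β) {f : ∀ k, Matrix {i // β i = k} {i // β i = k} R}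
    (hf : ∀ k, f k ∈ layers {i // β i = k} R) : glue β f ∈ layers ι R := by
  choose τ hτ hzero using hf
  let T (i : ι) : ι := τ (β i) ⟨i, rfl⟩
  have hT {k : κ} (i : {i // β i = k}) : T i = τ k i := by
    obtain ⟨i, rfl⟩ := i
    rfl
  refine ⟨T, ⟨fun i => ?_, fun i hi => ⟨hi, fun x hix hx => ?_⟩⟩, fun i j hij hj => ?_⟩
  · rw [hT (τ (β i) ⟨i, rfl⟩), (hτ (β i)).involutive]
  · have hTi : β (T i) = β i := (τ (β i) ⟨i, rfl⟩).2
    have hxi : β x = β i := le_antisymm (hTi ▸ hβ hx.le) (hβ hix.le)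
    exact ((hτ (β i)).covBy (i := ⟨i, rfl⟩) hi).2 (c := ⟨x, hxi⟩) hix hx
  · by_cases h : β j = β i
    · rw [glue_apply f (⟨i, rfl⟩ : {x // β x = β i}) ⟨j, h⟩]
      exact hzero _ _ _ (fun e => hij (congrArg Subtype.val e))
        fun e => hj (congrArg Subtype.val e)
    · exact isBlockDiagonal_glue f (Ne.symm h)

theorem glue_mem_layers_pow [Fintype ι] [PartialOrder κ] [DecidableEq κ] [Fintype κ] [Semiring R]
    {β : ι → κ} (hβ : Monotone β) {n : ℕ} {f : ∀ k, Matrix {i // β i = k} {i // β i = k} R}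
    (hf : ∀ k, f k ∈ layers {i // β i = k} R ^ n) : glue β f ∈ layers ι R ^ n := by
  simp only [Set.mem_pow] at hf
  choose F hF using hf
  have hprod : (List.ofFn fun t k => (F k t : Matrix {i // β i = k} _ R)).prod = f := by
    ext1 k
    rw [Pi.list_prod_apply, List.map_ofFn]
    exact hF k
  rw [← hprod, map_list_prod, List.map_ofFn, Set.mem_pow]
  exact ⟨fun t => ⟨_, glue_mem_layers hβ fun k => (F k t).2⟩, rfl⟩

theorem submatrix_mem_layers {ι' : Type*} [LinearOrder ι'] [Zero R] (e : ι ≃o ι')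
    {F : Matrix ι' ι' R} (hF : F ∈ layers ι' R) : F.submatrix e e ∈ layers ι R := by
  obtain ⟨τ, hτ, h⟩ := hF
  refine ⟨fun i => e.symm (τ (e i)), ⟨fun i => ?_, fun i hi => ?_⟩, fun i j hij hj => ?_⟩
  · simp [hτ.involutive (e i)]
  · rw [← apply_covBy_apply_iff e, e.apply_symm_apply]
    exact hτ.covBy (by simpa using e.lt_iff_lt.2 hi)
  · exact h _ _ (e.injective.ne hij) fun h => hj (by simp [← h])

theorem submatrix_mem_layers_pow {ι' : Type*} [LinearOrder ι'] [Fintype ι] [Fintype ι']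
    [Semiring R] (e : ι ≃o ι') {n : ℕ} {M : Matrix ι' ι' R} (hM : M ∈ layers ι' R ^ n) :
    M.submatrix e e ∈ layers ι R ^ n := by
  let φ := reindexRingEquiv R e.symm.toEquiv
  have hφ : φ '' layers ι' R ⊆ layers ι R :=
    Set.image_subset_iff.2 fun _ hF => submatrix_mem_layers e hF
  have hpow : φ M ∈ (φ '' layers ι' R) ^ n := Set.image_pow φ _ n ▸ Set.mem_image_of_mem φ hM
  exact Set.pow_subset_pow_left hφ hpow

variable [Fintype ι] {K : Type*} [Field K]

theorem mem_layers_pow_of_isUnit {k : ℕ} (hk : k ≠ 0) (hι : 3 * Fintype.card ι ≤ k + 3)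
    {M : Matrix ι ι K} (hM : IsUnit M) : M ∈ layers ι K ^ k := by
  let e : Fin (Fintype.card ι) ≃o ι := Fintype.orderIsoFinOfCardEq ι rfl
  have hfin : M.submatrix e e ∈ layers (Fin (Fintype.card ι)) K ^ k :=
    mem_layers_pow_fin hk hι ((isUnit_submatrix_equiv e.toEquiv e.toEquiv).2 hM)
  have h := submatrix_mem_layers_pow e.symm hfin
  rwa [submatrix_submatrix, show ⇑e ∘ ⇑e.symm = id from funext e.apply_symm_apply,
    submatrix_id_id] at h

theorem IsBlockDiagonal.mem_layers_pow [LinearOrder κ] [Finite κ] {β : ι → κ}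
    (hβ : Monotone β) {k n : ℕ} (hk : k ≠ 0) (hn : 3 * n ≤ k + 3)
    (hcard : ∀ b, Fintype.card {i // β i = b} ≤ n) {M : Matrix ι ι K}
    (hM : IsBlockDiagonal β M) (hunit : IsUnit M) : M ∈ layers ι K ^ k := by
  have := Fintype.ofFinite κ
  rw [← hM.glue_toSquareBlock]
  refine glue_mem_layers_pow hβ fun b => mem_layers_pow_of_isUnit hk ?_
    (hM.isUnit_toSquareBlock hunit b)
  have := hcard b
  omega

end Layers

end Blocks

section Idempotents

variable {K : Type*} [Field K]

theorem exists_linearEquiv_comp_eq_of_finrank_range_eq {V : Type*} [AddCommGroup V] [Module K V]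
    [FiniteDimensional K V] {f g : V →ₗ[K] V} (hf : IsIdempotentElem f) (hg : IsIdempotentElem g)
    (h : Module.finrank K f.range = Module.finrank K g.range) :
    ∃ φ : V ≃ₗ[K] V, φ.toLinearMap ∘ₗ f = g ∘ₗ φ.toLinearMap := by
  have hker : Module.finrank K f.ker = Module.finrank K g.ker := by
    have h₁ := f.finrank_range_add_finrank_ker
    have h₂ := g.finrank_range_add_finrank_ker
    omega
  have pf := LinearMap.IsIdempotentElem.isProj_range f hf
  have pg := LinearMap.IsIdempotentElem.isProj_range g hg
  let u := Submodule.prodEquivOfIsCompl _ _ pf.isCompl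
  let v := Submodule.prodEquivOfIsCompl _ _ pg.isCompl
  let χ := (LinearEquiv.ofFinrankEq _ _ h).prodCongr (LinearEquiv.ofFinrankEq _ _ hker)
  have hfu (z) : f (u z) = u (z.1, 0) := by
    simpa [u] using LinearMap.congr_fun pf.eq_conj_prod_map' (u z)
  have hgv (z) : g (v z) = v (z.1, 0) := by
    simpa [v] using LinearMap.congr_fun pg.eq_conj_prod_map' (v z)
  refine ⟨u.symm ≪≫ₗ χ ≪≫ₗ v, LinearMap.ext fun x => ?_⟩
  obtain ⟨z, rfl⟩ := u.surjective x
  simp [hfu, hgv, χ]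

variable {ι : Type*} [Fintype ι]

theorem exists_isUnit_semiconjBy_of_rank_eq [DecidableEq ι] {e d : Matrix ι ι K}
    (he : IsIdempotentElem e) (hd : IsIdempotentElem d) (h : e.rank = d.rank) :
    ∃ c, IsUnit c ∧ SemiconjBy c e d := by
  obtain ⟨φ, hφ⟩ := exists_linearEquiv_comp_eq_of_finrank_range_eq
    (he.map toLinAlgEquiv') (hd.map toLinAlgEquiv') h
  refine ⟨LinearMap.toMatrix' φ.toLinearMap, ?_, ?_⟩
  · refine IsUnit.of_mul_eq_one (LinearMap.toMatrix' φ.symm.toLinearMap) ?_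
    rw [← LinearMap.toMatrix'_comp, φ.comp_symm, LinearMap.toMatrix'_id]
  · rw [SemiconjBy, ← LinearMap.toMatrix'_toLin' e, ← LinearMap.toMatrix'_toLin' d,
      ← LinearMap.toMatrix'_comp, ← LinearMap.toMatrix'_comp]
    exact congrArg LinearMap.toMatrix' hφ

theorem finrank_range_piMap {κ : Type*} [Fintype κ] {V W : κ → Type*} [∀ k, AddCommGroup (V k)]
    [∀ k, Module K (V k)] [∀ k, AddCommGroup (W k)] [∀ k, Module K (W k)]
    [∀ k, FiniteDimensional K (W k)] (f : ∀ k, V k →ₗ[K] W k) :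
    Module.finrank K (LinearMap.piMap f).range = ∑ k, Module.finrank K (f k).range := by
  have hcomp : LinearMap.piMap f = LinearMap.piMap (fun k => (f k).range.subtype) ∘ₗ
      LinearMap.piMap fun k => (f k).rangeRestrict := rfl
  have hsurj : (LinearMap.piMap fun k => (f k).rangeRestrict).range = ⊤ :=
    LinearMap.range_eq_top.2 (Function.Surjective.piMap fun k => (f k).surjective_rangeRestrict)
  have hinj : Function.Injective (LinearMap.piMap fun k => (f k).range.subtype) :=
    Function.Injective.piMap fun k => (f k).range.injective_subtype
  rw [hcomp, LinearMap.range_comp_of_range_eq_top _ hsurj, LinearMap.finrank_range_of_inj hinj,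
    Module.finrank_pi_fintype]

variable {κ : Type*} {β : ι → κ}

theorem rank_glue [DecidableEq ι] [Fintype κ] [DecidableEq κ]
    (f : ∀ k, Matrix {i // β i = k} {i // β i = k} K) :
    (glue β f).rank = ∑ k, (f k).rank := by
  let e : (ι → K) ≃ₗ[K] ∀ k, {i // β i = k} → K :=
    LinearEquiv.funCongrLeft K K (Equiv.sigmaFiberEquiv β) ≪≫ₗ LinearEquiv.piCurry K fun _ _ => K
  have he : e.toLinearMap ∘ₗ (glue β f).mulVecLin =
      LinearMap.piMap (fun k => (f k).mulVecLin) ∘ₗ e.toLinearMap := by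
    refine LinearMap.ext fun v => funext fun k => funext fun i => ?_
    change ∑ j, glue β f i j * v j = ∑ j, f k i j * v j
    rw [← Fintype.sum_fiberwise β, Finset.sum_eq_single k]
    · simp only [glue_apply]
    · intro b _ hb
      refine Finset.sum_eq_zero fun j _ => ?_
      rw [isBlockDiagonal_glue f (by rw [i.2, j.2]; exact hb.symm), zero_mul]
    · simp
  rw [rank, ← LinearEquiv.finrank_map_eq e, ← LinearMap.range_comp, he,
    LinearMap.range_comp_of_range_eq_top _ e.range, finrank_range_piMap]
  rfl

theorem IsBlockDiagonal.sum_rank_toSquareBlock [Fintype κ] [DecidableEq κ] {M : Matrix ι ι K}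
    (hM : IsBlockDiagonal β M) :
    ∑ k, (M.toSquareBlock β k).rank = M.rank := by
  classical
  rw [← rank_glue, hM.glue_toSquareBlock]

theorem IsBlockDiagonal.rank_toSquareBlock_eq [Finite κ] [DecidableEq κ] {M P : Matrix ι ι K}
    (hM : IsBlockDiagonal β M) (hP : IsBlockDiagonal β P) (hrank : M.rank = P.rank) {k : κ}
    (hne : ∀ b ≠ k, M.toSquareBlock β b = P.toSquareBlock β b) :
    (M.toSquareBlock β k).rank = (P.toSquareBlock β k).rank := by
  have := Fintype.ofFinite κ
  rw [← hM.sum_rank_toSquareBlock, ← hP.sum_rank_toSquareBlock,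
    Fintype.sum_eq_add_sum_compl k, Fintype.sum_eq_add_sum_compl k,
    Finset.sum_congr rfl fun b hb => by rw [hne b (by simpa using hb)]] at hrank
  exact Nat.add_right_cancel hrank

theorem exists_isBlockDiagonal_semiconjBy [DecidableEq ι] [Finite κ] {E : κ → Matrix ι ι K}
    {d : κ → ι → K}
    (hE : ∀ k, IsIdempotentElem (E k)) (hd : ∀ k, IsIdempotentElem (diagonal (d k)))
    (hrank : ∀ k, (E k).rank = (diagonal (d k)).rank)
    (hEd : ∀ k i j, β i ≠ k ∨ β j ≠ k → E k i j = diagonal (d k) i j)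
    (hconst : ∀ k i j, β i = β j → β i ≠ k → d k i = d k j) :
    ∃ C, IsUnit C ∧ IsBlockDiagonal β C ∧ ∀ k, SemiconjBy C (E k) (diagonal (d k)) := by
  classical
  have := Fintype.ofFinite κ
  have hdβ (k) : IsBlockDiagonal β (diagonal (d k)) := isBlockDiagonal_diagonal β _
  have hEβ (k) : IsBlockDiagonal β (E k) := fun i j hij => by
    rw [hEd k i j (by by_contra! h; exact hij (h.1.trans h.2.symm)), hdβ k hij]
  have hoff {k b} (hb : b ≠ k) : (E k).toSquareBlock β b = (diagonal (d k)).toSquareBlock β b := by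
    ext i j
    exact hEd k i j (Or.inl (i.2.trans_ne hb))
  choose c hc hcE using fun k => exists_isUnit_semiconjBy_of_rank_eq
    ((hEβ k).isIdempotentElem_toSquareBlock (hE k) k)
    ((hdβ k).isIdempotentElem_toSquareBlock (hd k) k)
    ((hEβ k).rank_toSquareBlock_eq (hdβ k) (hrank k) fun b hb => hoff hb)
  refine ⟨glue β c, (Pi.isUnit_iff.2 hc).map (glue β), isBlockDiagonal_glue c, fun k => ?_⟩
  rw [SemiconjBy, ← (hEβ k).glue_toSquareBlock, ← (hdβ k).glue_toSquareBlock, ← map_mul, ← map_mul]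
  congr 1
  funext b
  change c b * (E k).toSquareBlock β b = (diagonal (d k)).toSquareBlock β b * c b
  by_cases hb : b = k
  · exact hb ▸ hcE b
  · rw [hoff hb, toSquareBlock_def, ← submatrix, submatrix_diagonal _ _ Subtype.val_injective]
    ext i j
    rw [mul_diagonal, diagonal_mul, mul_comm]
    exact congrArg (· * _) (hconst k j i (j.2.trans i.2.symm) (j.2.trans_ne hb))

end Idempotents

section Banded

variable {N : ℕ}

/-- The partition of `Fin N` into consecutive intervals of length `n`, the first of which is
shortened by `o < n`, as the map sending an index to the number of its interval. -/
def blockIndex (n o : ℕ) (i : Fin N) : Fin (N + o) :=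
  ⟨(i + o) / n, (Nat.div_le_self _ _).trans_lt (by omega)⟩

theorem blockIndex_monotone (n o : ℕ) : Monotone (blockIndex n o : Fin N → Fin (N + o)) :=
  fun _ _ h => Nat.div_le_div_right (Nat.add_le_add_right h o)

theorem card_blockIndex_fiber_le {n : ℕ} (hn : 0 < n) (o : ℕ) (b : Fin (N + o)) :
    Fintype.card {i : Fin N // blockIndex n o i = b} ≤ n := by
  let f (i : {i : Fin N // blockIndex n o i = b}) : Fin n := ⟨(i + o) % n, Nat.mod_lt _ hn⟩
  have hf : Function.Injective f := fun i j hij => by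
    have hdiv : ((i : Fin N) + o : ℕ) / n = ((j : Fin N) + o : ℕ) / n :=
      congrArg Fin.val (i.2.trans j.2.symm)
    have hmod : ((i : Fin N) + o : ℕ) % n = ((j : Fin N) + o : ℕ) % n := congrArg Fin.val hij
    have h := Nat.div_add_mod ((i : Fin N) + o) n
    rw [hdiv, hmod, Nat.div_add_mod] at h
    exact Subtype.ext (Fin.ext (Nat.add_right_cancel h.symm))
  simpa using Fintype.card_le_of_injective f hf

variable {R : Type*}

/-- `A` vanishes outside the diagonals at distance at most `w` from the main one. -/
def HasBandwidth [Zero R] (w : ℕ) (A : Matrix (Fin N) (Fin N) R) : Prop :=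
  ∀ i j : Fin N, ((j : ℕ) + w < i ∨ (i : ℕ) + w < j) → A i j = 0

theorem HasBandwidth.transpose [Zero R] {w : ℕ} {A : Matrix (Fin N) (Fin N) R}
    (hA : HasBandwidth w A) : HasBandwidth w Aᵀ :=
  fun i j h => hA j i h.symm

/-- The indicator vector of the indices below `p`; its diagonal matrix is the projection onto the
first `p` coordinates. -/
def cut (R : Type*) [Zero R] [One R] (p : ℕ) (i : Fin N) : R :=
  if (i : ℕ) < p then 1 else 0

section Semiring

variable [Semiring R]

theorem isIdempotentElem_diagonal_cut (p : ℕ) :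
    IsIdempotentElem (diagonal (cut R p : Fin N → R)) := by
  rw [IsIdempotentElem, diagonal_mul_diagonal]
  congr 1
  funext i
  rw [cut]
  split_ifs
  · rw [one_mul]
  · rw [zero_mul]

theorem apply_eq_zero_of_commute_cut {p : ℕ} {B : Matrix (Fin N) (Fin N) R}
    (hB : Commute B (diagonal (cut R p))) {i j : Fin N} (hij : ¬((i : ℕ) < p ↔ (j : ℕ) < p)) :
    B i j = 0 := by
  have h := congrFun₂ hB.eq i j
  rw [mul_diagonal, diagonal_mul, cut, cut] at h
  split_ifs at h with hj hi hi
  · exact (hij (iff_of_true hi hj)).elim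
  · simpa using h
  · simpa using h.symm
  · exact (hij (iff_of_false hi hj)).elim

theorem isBlockDiagonal_of_commute_cut {n : ℕ} (hn : 0 < n) {B : Matrix (Fin N) (Fin N) R}
    (hB : ∀ q < N, Commute B (diagonal (cut R (q * n)))) : IsBlockDiagonal (blockIndex n 0) B := by
  have hlt (a q : ℕ) : a < q * n ↔ a / n < q := (Nat.div_lt_iff_lt_mul hn).symm
  intro i j hij
  rw [Ne, Fin.ext_iff] at hij
  change ¬(i : ℕ) / n = j / n at hij
  have hq : max ((i : ℕ) / n) (j / n) < N :=
    max_lt ((Nat.div_le_self _ _).trans_lt i.2) ((Nat.div_le_self _ _).trans_lt j.2)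
  refine apply_eq_zero_of_commute_cut (hB _ hq) ?_
  rw [hlt, hlt]
  omega

theorem HasBandwidth.mul_cut_apply {w p : ℕ} {B : Matrix (Fin N) (Fin N) R}
    (hB : HasBandwidth w B) {i : Fin N} (hi : (i : ℕ) + w < p ∨ p + w ≤ i) (a : Fin N) :
    (B * diagonal (cut R p) : Matrix (Fin N) (Fin N) R) i a = cut R p i * B i a := by
  rw [mul_diagonal, cut, cut]
  split_ifs
  · rw [mul_one, one_mul]
  · rw [hB i a (by omega), mul_one, zero_mul]
  · rw [hB i a (by omega), mul_zero, mul_zero]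
  · rw [mul_zero, zero_mul]

theorem HasBandwidth.conj_cut_apply {w p : ℕ} {A B : Matrix (Fin N) (Fin N) R}
    (hB : HasBandwidth w B) (hBA : B * A = 1) {i : Fin N}
    (hi : (i : ℕ) + w < p ∨ p + w ≤ i) (j : Fin N) :
    (B * diagonal (cut R p) * A : Matrix (Fin N) (Fin N) R) i j = diagonal (cut R p) i j :=
  calc
    _ = cut R p i * (B * A) i j := by
      rw [mul_apply, mul_apply, Finset.mul_sum]
      simp only [hB.mul_cut_apply hi, mul_assoc]
    _ = diagonal (cut R p) i j := by rw [hBA, ← diagonal_mul, mul_one]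

end Semiring

theorem HasBandwidth.conj_cut_apply' [CommSemiring R] {w p : ℕ} {A B : Matrix (Fin N) (Fin N) R}
    (hA : HasBandwidth w A) (hBA : B * A = 1) (i : Fin N) {j : Fin N}
    (hj : (j : ℕ) + w < p ∨ p + w ≤ j) :
    (B * diagonal (cut R p) * A : Matrix (Fin N) (Fin N) R) i j = diagonal (cut R p) i j := by
  have hAB : Aᵀ * Bᵀ = 1 := by rw [← transpose_mul, hBA, transpose_one]
  have h := hA.transpose.conj_cut_apply hAB hj i
  rwa [← diagonal_transpose, ← transpose_mul, ← transpose_mul, ← mul_assoc] at h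

theorem add_lt_of_blockIndex_lt {w : ℕ} (hw : 0 < w) {i : Fin N} {k : Fin (N + w)}
    (h : blockIndex (2 * w) w i < k) : (i : ℕ) + w < k * (2 * w) :=
  (Nat.div_lt_iff_lt_mul (by omega)).1 h

theorem add_le_of_lt_blockIndex {w : ℕ} (hw : 0 < w) {i : Fin N} {k : Fin (N + w)}
    (h : k < blockIndex (2 * w) w i) : k * (2 * w) + w ≤ i := by
  have hle : (k + 1) * (2 * w) ≤ i + w := (Nat.le_div_iff_mul_le (by omega)).1 h
  rw [add_mul] at hle
  omega

theorem add_lt_or_add_le_of_blockIndex_ne {w : ℕ} (hw : 0 < w) {i : Fin N} {k : Fin (N + w)}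
    (h : blockIndex (2 * w) w i ≠ k) : (i : ℕ) + w < k * (2 * w) ∨ k * (2 * w) + w ≤ i :=
  h.lt_or_gt.imp (add_lt_of_blockIndex_lt hw) (add_le_of_lt_blockIndex hw)

theorem cut_eq_of_blockIndex_eq [Zero R] [One R] {w : ℕ} (hw : 0 < w) {i j : Fin N}
    {k : Fin (N + w)} (hij : blockIndex (2 * w) w i = blockIndex (2 * w) w j)
    (hi : blockIndex (2 * w) w i ≠ k) : cut R (k * (2 * w)) i = cut R (k * (2 * w)) j := by
  rw [cut, cut]
  refine if_congr ?_ rfl rfl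
  rcases hi.lt_or_gt with h | h
  · have h₁ := add_lt_of_blockIndex_lt hw h
    have h₂ := add_lt_of_blockIndex_lt hw (hij ▸ h)
    omega
  · have h₁ := add_le_of_lt_blockIndex hw h
    have h₂ := add_le_of_lt_blockIndex hw (hij ▸ h)
    omega

theorem isIdempotentElem_conj {M : Type*} [Monoid M] {a b e : M} (hab : a * b = 1)
    (he : IsIdempotentElem e) : IsIdempotentElem (b * e * a) :=
  calc b * e * a * (b * e * a) = b * (e * (a * b) * e) * a := by simp only [mul_assoc]
    _ = b * e * a := by rw [hab, mul_one, he.eq]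

variable {K : Type*} [Field K]

theorem HasBandwidth.exists_eq_mul_isBlockDiagonal {w : ℕ} (hw : 0 < w)
    {A : Matrix (Fin N) (Fin N) K} (hA : IsUnit A) (hband : HasBandwidth w A)
    (hinv : HasBandwidth w A⁻¹) :
    ∃ B C, A = B * C ∧ IsUnit B ∧ IsUnit C ∧
      IsBlockDiagonal (blockIndex (2 * w) 0) B ∧ IsBlockDiagonal (blockIndex (2 * w) w) C := by
  let d (k : Fin (N + w)) : Fin N → K := cut K (k * (2 * w))
  let E (k : Fin (N + w)) := A⁻¹ * diagonal (d k) * A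
  have hdet := (isUnit_iff_isUnit_det A).1 hA
  have hAE (k) : SemiconjBy A (E k) (diagonal (d k)) := by
    simp only [SemiconjBy, E, ← mul_assoc, mul_nonsing_inv A hdet, one_mul]
  have hd (k) : IsIdempotentElem (diagonal (d k)) := isIdempotentElem_diagonal_cut _
  have hE (k) : IsIdempotentElem (E k) :=
    isIdempotentElem_conj (mul_nonsing_inv A hdet) (hd k)
  have hrank (k) : (E k).rank = (diagonal (d k)).rank := by
    rw [rank_mul_eq_left_of_isUnit_det _ _ hdet,
      rank_mul_eq_right_of_isUnit_det _ _ (isUnit_nonsing_inv_det A hdet)]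
  have hEd (k : Fin (N + w)) (i j : Fin N)
      (h : blockIndex (2 * w) w i ≠ k ∨ blockIndex (2 * w) w j ≠ k) :
      E k i j = diagonal (d k) i j := by
    have hBA := nonsing_inv_mul A hdet
    rcases h with h | h
    · exact hinv.conj_cut_apply hBA (add_lt_or_add_le_of_blockIndex_ne hw h) j
    · exact hband.conj_cut_apply' hBA i (add_lt_or_add_le_of_blockIndex_ne hw h)
  obtain ⟨_, ⟨C, rfl⟩, hC, hCE⟩ := exists_isBlockDiagonal_semiconjBy hE hd hrank hEd
    fun k i j hij hi => cut_eq_of_blockIndex_eq hw hij hi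
  refine ⟨A * ↑C⁻¹, C, (C.inv_mul_cancel_right A).symm, hA.mul C⁻¹.isUnit, C.isUnit, ?_, hC⟩
  exact isBlockDiagonal_of_commute_cut (by omega) fun q hq =>
    (hAE ⟨q, by omega⟩).mul_left (hCE ⟨q, by omega⟩).units_inv_symm_left

theorem blockFactorization_of_banded_general {w : ℕ} (hw : 1 ≤ w) {A : Matrix (Fin N) (Fin N) K}
    (hA : IsUnit A) (hband : HasBandwidth w A) (hbandInv : HasBandwidth w A⁻¹) :
    A ∈ layers (Fin N) K ^ (6 * (2 * w - 1)) := by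
  obtain ⟨B, C, rfl, hB, hC, hBβ, hCβ⟩ := hband.exists_eq_mul_isBlockDiagonal hw hA hbandInv
  have hk : 3 * (2 * w - 1) ≠ 0 := by omega
  have hn : 3 * (2 * w) ≤ 3 * (2 * w - 1) + 3 := by omega
  have hcard (o) := card_blockIndex_fiber_le (N := N) (Nat.mul_pos two_pos hw) o
  rw [show 6 * (2 * w - 1) = 3 * (2 * w - 1) + 3 * (2 * w - 1) by omega, pow_add]
  exact Set.mul_mem_mul
    (hBβ.mem_layers_pow (blockIndex_monotone _ _) hk hn (hcard 0) hB)
    (hCβ.mem_layers_pow (blockIndex_monotone _ _) hk hn (hcard w) hC)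

end Banded

theorem six_mul_two_mul_sub_one_le (w : ℕ) : 6 * (2 * w - 1) ≤ 2 * w * (2 * w + 1) := by
  rcases w with _ | v
  · rfl
  · have hv : v ≤ v * v := Nat.le_mul_self v
    have hsub : 2 * (v + 1) - 1 = 2 * v + 1 := by omega
    rw [hsub]
    linarith

/-- If `A` is invertible and both `A` and `A⁻¹` have bandwidth `w ≥ 1`, then `A` is a
product of `L ≤ 2w(2w+1)` block diagonal matrices with blocks of size at most 2. -/
theorem blockFactorization_of_banded (N w : ℕ) (hw : 1 ≤ w)
    (A : Matrix (Fin N) (Fin N) ℂ) (hA : IsUnit A)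
    (hband : ∀ i j : Fin N, ((j : ℕ) + w < (i : ℕ) ∨ (i : ℕ) + w < (j : ℕ)) → A i j = 0)
    (hbandInv : ∀ i j : Fin N, ((j : ℕ) + w < (i : ℕ) ∨ (i : ℕ) + w < (j : ℕ)) → A⁻¹ i j = 0) :
    ∃ L, L ≤ 2 * w * (2 * w + 1) ∧
      ∃ F : Fin L → Matrix (Fin N) (Fin N) ℂ,
        (∀ i, BlockDiag2 (F i)) ∧ A = (List.ofFn F).prod := by
  obtain ⟨F, hF⟩ := Set.mem_pow.1 (blockFactorization_of_banded_general hw hA hband hbandInv)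
  exact ⟨_, six_mul_two_mul_sub_one_le w, fun i => F i, fun i => blockDiag2_of_mem_layers (F i).2,
    hF.symm⟩
end

section
/- Let F_1, …, F_i ∈ M_{N×N}(ℂ) each be block diagonal with blocks of size at most 2, and let p = (Φ_{F_i} ∘ ⋯ ∘ Φ_{F_2} ∘ Φ_{F_1})(X_1 X_2 ⋯ X_N). Then every monomial X_1^{n_1} ⋯ X_N^{n_N} in the support of p satisfies n_k ≤ 2^i for every k ∈ {1,…,N}. -/
/-!
Substituting `f` for the variables turns a monomial `∏ i, X i ^ m i` into `∏ i, f i ^ m i`, so a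
variable `X k` can gain degree only through those `f i` in which it occurs. For linear forms given
by the rows of a matrix, these correspond to the nonzero entries of column `k`, each contributing at
most the old degree in `X i`. A column of a block diagonal matrix with blocks of size at most 2 has
at most two nonzero entries, so each layer at most doubles the largest exponent, which starts at 1.
-/

open MvPolynomial

/-- The algebra endomorphism `Φ_A` of `ℂ[X_1,…,X_N]` determined by
`Φ_A(X_i) = Σ_j A_{ij} X_j`. -/
noncomputable def Phi {N : ℕ} (A : Matrix (Fin N) (Fin N) ℂ) :
    MvPolynomial (Fin N) ℂ →ₐ[ℂ] MvPolynomial (Fin N) ℂ :=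
  aeval fun i => ∑ j, C (A i j) * X j

section Substitution

variable {R σ τ : Type*} [CommSemiring R]

lemma degreeOf_prod_X_le_one (s : Finset σ) (k : σ) :
    degreeOf k (∏ j ∈ s, X j : MvPolynomial σ R) ≤ 1 := by
  classical
  cases subsingleton_or_nontrivial R
  · simp [Subsingleton.elim (∏ j ∈ s, X j : MvPolynomial σ R) 0]
  calc degreeOf k (∏ j ∈ s, X j : MvPolynomial σ R)
      ≤ ∑ j ∈ s, degreeOf k (X j : MvPolynomial σ R) := degreeOf_prod_le k s X
    _ ≤ 1 := by
      simp only [degreeOf_X, Finset.sum_ite_eq]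
      split_ifs <;> simp

lemma degreeOf_bind₁_le (f : σ → MvPolynomial τ R) (q : MvPolynomial σ R) (k : τ) :
    degreeOf k (bind₁ f q) ≤ ∑ i ∈ q.vars, degreeOf i q * degreeOf k (f i) := by
  rw [← aeval_eq_bind₁, aeval_def, eval₂_eq]
  refine (degreeOf_sum_le _ _ _).trans (Finset.sup_le fun m hm ↦ ?_)
  calc degreeOf k (C (coeff m q) * ∏ i ∈ m.support, f i ^ m i)
      ≤ degreeOf k (∏ i ∈ m.support, f i ^ m i) := degreeOf_C_mul_le _ _ _
    _ ≤ ∑ i ∈ m.support, degreeOf k (f i ^ m i) := degreeOf_prod_le _ _ _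
    _ ≤ ∑ i ∈ m.support, degreeOf i q * degreeOf k (f i) := by
      gcongr with i
      exact (degreeOf_pow_le _ _ _).trans (Nat.mul_le_mul_right _ (monomial_le_degreeOf i hm))
    _ ≤ ∑ i ∈ q.vars, degreeOf i q * degreeOf k (f i) :=
      Finset.sum_le_sum_of_subset (support_subset_vars_of_mem_support hm)

variable [Fintype τ]

lemma degreeOf_toMvPolynomial_le_one (A : Matrix σ τ R) (i : σ) (k : τ) :
    degreeOf k (A.toMvPolynomial i) ≤ 1 :=
  (degreeOf_le_totalDegree _ _).trans (A.toMvPolynomial_totalDegree_le i)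

lemma degreeOf_toMvPolynomial_eq_zero {A : Matrix σ τ R} {i : σ} {k : τ} (h : A i k = 0) :
    degreeOf k (A.toMvPolynomial i) = 0 := by
  refine Nat.le_zero.mp ((degreeOf_sum_le _ _ _).trans (Finset.sup_le fun j _ ↦ ?_))
  by_cases hij : A i j = 0
  · simp [hij]
  · have hjk : j ≠ k := by
      rintro rfl
      exact hij h
    simp [degreeOf_monomial_eq _ _ hij, hjk]

lemma degreeOf_bind₁_toMvPolynomial_le {A : Matrix σ τ R} {q : MvPolynomial σ R} {c d : ℕ} {k : τ}
    (hA : {i | A i k ≠ 0}.encard ≤ c) (hq : ∀ i, degreeOf i q ≤ d) :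
    degreeOf k (bind₁ A.toMvPolynomial q) ≤ c * d := by
  classical
  have hcard : (q.vars.filter fun i ↦ A i k ≠ 0).card ≤ c := by
    rw [← Nat.cast_le (α := ℕ∞), ← Set.encard_coe_eq_coe_finsetCard, Finset.coe_filter]
    exact (Set.encard_le_encard fun _ hi ↦ hi.2).trans hA
  calc degreeOf k (bind₁ A.toMvPolynomial q)
      ≤ ∑ i ∈ q.vars, degreeOf i q * degreeOf k (A.toMvPolynomial i) := degreeOf_bind₁_le _ _ _
    _ = ∑ i ∈ q.vars with A i k ≠ 0, degreeOf i q * degreeOf k (A.toMvPolynomial i) := by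
      symm
      refine Finset.sum_filter_of_ne fun i _ hi h ↦ hi ?_
      rw [degreeOf_toMvPolynomial_eq_zero h, mul_zero]
    _ ≤ ∑ i ∈ q.vars with A i k ≠ 0, d * 1 := by
      gcongr with i
      · exact hq i
      · exact degreeOf_toMvPolynomial_le_one A i k
    _ = (q.vars.filter fun i ↦ A i k ≠ 0).card * d := by
      rw [Finset.sum_const, smul_eq_mul, mul_one]
    _ ≤ c * d := Nat.mul_le_mul_right d hcard

theorem local_degree_bound_general {L : List (Matrix τ τ R)} {q : MvPolynomial τ R} {c d : ℕ}
    (hL : ∀ A ∈ L, ∀ k, {i | A i k ≠ 0}.encard ≤ c) (hq : ∀ k, degreeOf k q ≤ d) (k : τ) :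
    degreeOf k (L.foldl (fun p A ↦ bind₁ A.toMvPolynomial p) q) ≤ c ^ L.length * d := by
  induction L generalizing q d with
  | nil => simpa using hq k
  | cons A L ih =>
    obtain ⟨hA, hL⟩ := List.forall_mem_cons.mp hL
    rw [List.foldl_cons, List.length_cons, pow_succ, mul_assoc]
    exact ih hL fun j ↦ degreeOf_bind₁_toMvPolynomial_le (hA j) hq

end Substitution

lemma Phi_eq_bind₁ {N : ℕ} (A : Matrix (Fin N) (Fin N) ℂ) : Phi A = bind₁ A.toMvPolynomial := by
  simp only [Phi, aeval_eq_bind₁, C_mul_X_eq_monomial]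
  rfl

lemma BlockDiag2.encard_column_le_two {N : ℕ} {F : Matrix (Fin N) (Fin N) ℂ} (hF : BlockDiag2 F)
    (k : Fin N) : {i | F i k ≠ 0}.encard ≤ 2 := by
  obtain ⟨S, -, hS, hF⟩ := hF
  have adjacent {i : Fin N} (hi : F i k ≠ 0) (hik : i ≠ k) :
      ((i : ℕ) ∈ S ∧ (k : ℕ) = i + 1) ∨ ((k : ℕ) ∈ S ∧ (i : ℕ) = k + 1) := by
    contrapose! hi
    refine hF i k hik fun l hl h ↦ ?_
    rcases h with ⟨rfl, hk⟩ | ⟨hi', rfl⟩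
    · exact hi.1 hl hk
    · exact hi.2 hl hi'
  have offDiag : ({i | F i k ≠ 0} \ {k}).Subsingleton := by
    rintro i ⟨hi, hik⟩ j ⟨hj, hjk⟩
    rcases adjacent hi hik with ⟨hiS, hi⟩ | ⟨hkS, hi⟩ <;>
      rcases adjacent hj hjk with ⟨hjS, hj⟩ | ⟨hkS', hj⟩
    · exact Fin.ext (by lia)
    · exact absurd (hi ▸ hkS') (hS i hiS)
    · exact absurd (hj ▸ hkS) (hS j hjS)
    · exact Fin.ext (by lia)
  calc {i | F i k ≠ 0}.encard
      ≤ ({i | F i k ≠ 0} \ {k}).encard + ({k} : Set (Fin N)).encard :=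
        Set.encard_le_encard_sdiff_add_encard _ _
    _ ≤ 1 + 1 := by
      gcongr
      · exact Set.encard_le_one_iff_subsingleton.mpr offDiag
      · exact (Set.encard_singleton k).le
    _ = 2 := one_add_one_eq_two

/-- After applying `i` layers `Φ_{F_i} ∘ ⋯ ∘ Φ_{F_1}` of gates coming from block
diagonal matrices with blocks of size at most 2 to `X_1 X_2 ⋯ X_N`, every variable
appears in every monomial with exponent at most `2^i`. -/
theorem local_degree_bound (N i : ℕ) (F : Fin i → Matrix (Fin N) (Fin N) ℂ)
    (hF : ∀ l, BlockDiag2 (F l))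
    (p : MvPolynomial (Fin N) ℂ)
    (hp : p = (List.ofFn F).foldl (fun q G => Phi G q) (∏ j, X j)) :
    ∀ m ∈ p.support, ∀ k, m k ≤ 2 ^ i := by
  have hdeg (k : Fin N) : degreeOf k p ≤ 2 ^ i := by
    simpa [hp, Phi_eq_bind₁] using local_degree_bound_general
      (List.forall_mem_ofFn_iff.mpr fun l ↦ (hF l).encard_column_le_two)
      (degreeOf_prod_X_le_one Finset.univ) k
  exact fun m hm k ↦ (monomial_le_degreeOf k hm).trans (hdeg k)
end

section
/- Let F_1, F_2, …, F_L ∈ M_{N×N}(ℂ) be arbitrary matrices and let A = F_1 F_2 ⋯ F_L. Then per(A) equals the coefficient of the monomial X_1 X_2 ⋯ X_N in the polynomial (Φ_{F_L} ∘ ⋯ ∘ Φ_{F_2} ∘ Φ_{F_1})(X_1 X_2 ⋯ X_N). -/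
/-!
Substitution reverses products, `Φ_B ∘ Φ_A = Φ_{AB}`, so the whole circuit acts as `Φ_A`. Expanding
`∏ i, ∑ j, A i j X_j` over all maps `p : i ↦ j`, the monomial attached to `p` contains `X_j` to the
power `#p⁻¹(j)`; it is `X_1 ⋯ X_N` exactly when every fibre is a singleton, so only the
permutations contribute to that coefficient, and their total weight is the permanent.
-/

open MvPolynomial

/-- The permanent `per(A) = Σ_{π ∈ S_N} ∏_i A_{i,π(i)}`. -/
noncomputable def per {N : ℕ} (A : Matrix (Fin N) (Fin N) ℂ) : ℂ :=
  ∑ σ : Equiv.Perm (Fin N), ∏ i, A i (σ i)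

/-- The linear change of variables `X_i ↦ ∑ j, A i j X_j`, generalizing `Phi` to rectangular
matrices over a commutative semiring. -/
noncomputable def linearSubst {R m n : Type*} [CommSemiring R] [Fintype n] (A : Matrix m n R) :
    MvPolynomial m R →ₐ[R] MvPolynomial n R :=
  bind₁ A.toMvPolynomial

section LinearSubst

variable {R l m n : Type*} [CommSemiring R]

theorem linearSubst_one [Fintype n] [DecidableEq n] :
    linearSubst (1 : Matrix n n R) = AlgHom.id R (MvPolynomial n R) := by
  rw [linearSubst, Matrix.toMvPolynomial_one, bind₁_X_left]

theorem linearSubst_mul [Fintype m] [Fintype n] (A : Matrix l m R) (B : Matrix m n R) :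
    linearSubst (A * B) = (linearSubst B).comp (linearSubst A) := by
  simp only [linearSubst, bind₁_comp_bind₁, ← Matrix.toMvPolynomial_mul]

theorem foldl_linearSubst [Fintype n] [DecidableEq n] (Fs : List (Matrix n n R))
    (q : MvPolynomial n R) :
    Fs.foldl (fun q F => linearSubst F q) q = linearSubst Fs.prod q := by
  induction Fs generalizing q with
  | nil => rw [List.foldl_nil, List.prod_nil, linearSubst_one, AlgHom.id_apply]
  | cons F Fs ih => rw [List.foldl_cons, ih, List.prod_cons, linearSubst_mul, AlgHom.comp_apply]

end LinearSubst

section Coefficient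

variable {R m n : Type*} [CommSemiring R] [Fintype m]

theorem sum_single_eq_ones_iff_bijective [Finite n] (p : m → n) :
    ∑ i, Finsupp.single (p i) 1 = Finsupp.equivFunOnFinite.symm (fun _ : n => (1 : ℕ)) ↔
      p.Bijective := by
  classical
  have hcount (j : n) : (∑ i, Finsupp.single (p i) 1) j = Finset.card {i | p i = j} := by
    simp only [Finsupp.finsetSum_apply, Finsupp.single_apply, Finset.sum_boole, Nat.cast_id]
  simp only [DFunLike.ext_iff, hcount, Finsupp.equivFunOnFinite_symm_apply_apply,
    Finset.card_eq_one_iff_existsUnique, Finset.mem_filter_univ,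
    Function.bijective_iff_existsUnique]

variable [Fintype n] [DecidableEq m]

theorem prod_toMvPolynomial_eq_sum_monomial (A : Matrix m n R) :
    ∏ i, A.toMvPolynomial i =
      ∑ p : m → n, monomial (∑ i, Finsupp.single (p i) 1) (∏ i, A i (p i)) := by
  simp only [Matrix.toMvPolynomial, Fintype.prod_sum, monomial_sum_prod]

theorem coeff_prod_toMvPolynomial [DecidableEq n] (A : Matrix m n R) :
    coeff (Finsupp.equivFunOnFinite.symm fun _ => 1) (∏ i, A.toMvPolynomial i) =
      ∑ e : m ≃ n, ∏ i, A i (e i) := by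
  classical
  calc coeff (Finsupp.equivFunOnFinite.symm fun _ => 1) (∏ i, A.toMvPolynomial i)
    _ = ∑ p : m → n, if p.Bijective then ∏ i, A i (p i) else 0 := by
      simp only [prod_toMvPolynomial_eq_sum_monomial, coeff_sum, coeff_monomial,
        sum_single_eq_ones_iff_bijective]
    _ = ∑ p : {p : m → n // p.Bijective}, ∏ i, A i (p.1 i) := by
      rw [← Finset.sum_filter, Finset.sum_subtype _ fun p => Finset.mem_filter_univ p]
    _ = ∑ e : m ≃ n, ∏ i, A i (e i) :=
      Fintype.sum_equiv Equiv.bijectiveEquiv _ _ fun _ => rfl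

theorem coeff_linearSubst_prod_X (A : Matrix m m R) :
    coeff (Finsupp.equivFunOnFinite.symm fun _ => 1) (linearSubst A (∏ i, X i)) =
      A.permanent := by
  rw [← Matrix.permanent_transpose, linearSubst, map_prod]
  simp only [bind₁_X_right, coeff_prod_toMvPolynomial, Matrix.permanent, Matrix.transpose_apply]

end Coefficient

theorem per_eq_coeff_circuit_general {R n : Type*} [CommSemiring R] [Fintype n] [DecidableEq n]
    (Fs : List (Matrix n n R)) :
    Fs.prod.permanent =
      coeff (Finsupp.equivFunOnFinite.symm fun _ => 1)
        (Fs.foldl (fun q F => linearSubst F q) (∏ j, X j)) := by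
  rw [foldl_linearSubst, coeff_linearSubst_prod_X]

theorem Phi_eq_linearSubst {N : ℕ} (A : Matrix (Fin N) (Fin N) ℂ) : Phi A = linearSubst A := by
  ext1 i
  simp only [Phi, linearSubst, aeval_X, bind₁_X_right, Matrix.toMvPolynomial, C_mul_X_eq_monomial]

theorem per_eq_permanent {N : ℕ} (A : Matrix (Fin N) (Fin N) ℂ) : per A = A.permanent :=
  A.permanent_transpose

/-- For `A = F_1 F_2 ⋯ F_L`, the permanent of `A` equals the coefficient of
`X_1 X_2 ⋯ X_N` in `(Φ_{F_L} ∘ ⋯ ∘ Φ_{F_1})(X_1 X_2 ⋯ X_N)`. -/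
theorem per_eq_coeff_circuit (N L : ℕ) (F : Fin L → Matrix (Fin N) (Fin N) ℂ)
    (A : Matrix (Fin N) (Fin N) ℂ) (hA : A = (List.ofFn F).prod) :
    per A =
      coeff (Finsupp.equivFunOnFinite.symm fun _ => 1)
        ((List.ofFn F).foldl (fun q G => Phi G q) (∏ j, X j)) := by
  simpa only [hA, per_eq_permanent, Phi_eq_linearSubst] using
    per_eq_coeff_circuit_general (List.ofFn F)
end

section
/- Let p ∈ ℂ[X_1,…,X_N] be a polynomial in which every variable appears in every monomial with exponent at most d. Let 1 < k < N and let F ∈ M_{N×N}(ℂ) agree with the identity matrix except possibly on the entries F_{kk}, F_{k,k+1}, F_{k+1,k}, F_{k+1,k+1}; then every variable appears in every monomial of Φ_F(p) with exponent at most 2d. For a polynomial q whose variable exponents are bounded by D and a cut position j, let rank_j(q) denote the rank of the matrix with rows indexed by (n_1,…,n_j) ∈ {0,…,D}^j, columns indexed by (n_{j+1},…,n_N) ∈ {0,…,D}^{N−j}, and entries the coefficients of q. Then rank_k(Φ_F(p)) ≤ (2d+1) · min( rank_{k−1}(p), rank_{k+1}(p) ), where rank_{k−1}(p) and rank_{k+1}(p)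 are taken with exponents bounded by d and rank_k(Φ_F(p)) with exponents bounded by 2d. That is, applying a two-site gate on sites k, k+1 increases the Schmidt rank across the cut between k and k+1 by at most the new local dimension times the Schmidt rank at the neighboring cuts. -/
/-!
A substitution `Φ_F` whose matrix `F` does not mix the variables before a cut with those after it
acts on the coefficient matrix across that cut as a product `P ↦ U * P * V`, so it cannot increase
the rank. A gate on the sites `s, s + 1` is of this kind for the cuts before `s` and after `s + 1`.
Moving the cut by one site multiplies the rank by at most the local dimension, because the rows (or
columns) with a fixed exponent at that site form a submatrix of the old coefficient matrix; the
local dimension is `2 * d + 1` after the gate, since `X_s` and `X_{s+1}` each occur in at most two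
of the linear forms `Φ_F(X_i)`.
-/

open MvPolynomial

/-- Coefficient matricization of `q` across the cut after the first `j` variables,
with all variable exponents bounded by `D`: rows are indexed by
`(n_1,…,n_j) ∈ {0,…,D}^j`, columns by `(n_{j+1},…,n_N) ∈ {0,…,D}^{N−j}`, and the
entry is the corresponding coefficient of `q`. -/
noncomputable def cutMatrix (N D j : ℕ) (q : MvPolynomial (Fin N) ℂ) :
    Matrix (Fin j → Fin (D + 1)) (Fin (N - j) → Fin (D + 1)) ℂ :=
  fun row col =>
    coeff (Finsupp.equivFunOnFinite.symm fun i : Fin N =>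
      if h : (i : ℕ) < j then (row ⟨i, h⟩ : ℕ)
      else (col ⟨(i : ℕ) - j, by have := i.isLt; omega⟩ : ℕ)) q

section MatrixRank

variable {K m n : Type*} [Field K] [Fintype n]

lemma matrix_rank_add_le (A B : Matrix m n K) : (A + B).rank ≤ A.rank + B.rank := by
  rw [Matrix.rank, Matrix.rank, Matrix.rank, Matrix.mulVecLin_add]
  exact (Submodule.finrank_mono (LinearMap.range_add_le _ _)).trans
    (Submodule.finrank_add_le_finrank_add_finrank _ _)

lemma matrix_rank_sum_le {ι : Type*} (t : Finset ι) (A : ι → Matrix m n K) :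
    (∑ x ∈ t, A x).rank ≤ ∑ x ∈ t, (A x).rank :=
  Finset.le_sum_of_subadditive _ Matrix.rank_zero.le matrix_rank_add_le t A

lemma matrix_rank_le_card_mul_rank_of_rowwise_submatrix [Finite m] {k l ι : Type*} [Fintype l]
    [Fintype ι] (P : Matrix k l K) (M : Matrix m n K) (label : m → ι) (f : m → k) (g : ι → n → l)
    (hM : ∀ i j, M i j = P (f i) (g (label i) j)) :
    M.rank ≤ Fintype.card ι * P.rank := by
  classical
  cases nonempty_fintype m
  let rowsLabelled (x : ι) : Matrix m m K :=
    Matrix.diagonal fun i => if label i = x then 1 else 0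
  have hsum : M = ∑ x, rowsLabelled x * P.submatrix f (g x) := by
    ext i j
    simp [rowsLabelled, Matrix.sum_apply, hM]
  calc M.rank
      ≤ ∑ x, (rowsLabelled x * P.submatrix f (g x)).rank := hsum ▸ matrix_rank_sum_le _ _
    _ ≤ ∑ _x : ι, P.rank := Finset.sum_le_sum fun x _ =>
        (Matrix.rank_mul_le_right _ _).trans (P.rank_submatrix_le f (g x))
    _ = Fintype.card ι * P.rank := by simp

end MatrixRank

section Supported

variable {σ τ R : Type*} [CommSemiring R]

lemma support_subset_of_mem_supported {S : Set σ} {f : MvPolynomial σ R}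
    (hf : f ∈ supported R S) {m : σ →₀ ℕ} (hm : coeff m f ≠ 0) : (m.support : Set σ) ⊆ S :=
  (Finset.coe_subset.2 (support_subset_vars_of_mem_support (mem_support_iff.2 hm))).trans
    (mem_supported.1 hf)

lemma monomial_mem_supported {S : Set σ} {m : σ →₀ ℕ} (hm : (m.support : Set σ) ⊆ S) (c : R) :
    monomial m c ∈ supported R S :=
  mem_supported.2 fun i hi => by
    obtain ⟨a, ha, hia⟩ := (mem_vars_iff_mem_support i).1 hi
    rw [Finset.mem_singleton.1 (support_monomial_subset ha)] at hia
    exact hm hia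

lemma algHom_mem_supported {S : Set σ} {T : Set τ} (φ : MvPolynomial σ R →ₐ[R] MvPolynomial τ R)
    (hφ : ∀ i ∈ S, φ (X i) ∈ supported R T) {f : MvPolynomial σ R} (hf : f ∈ supported R S) :
    φ f ∈ supported R T := by
  have : supported R S ≤ (supported R T).comap φ :=
    Algebra.adjoin_le (Set.image_subset_iff.2 hφ)
  exact this hf

lemma coeff_add_mul_of_mem_supported {S T : Set σ} (hST : Disjoint S T) {f g : MvPolynomial σ R}
    (hf : f ∈ supported R S) (hg : g ∈ supported R T) {a b : σ →₀ ℕ}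
    (ha : (a.support : Set σ) ⊆ S) (hb : (b.support : Set σ) ⊆ T) :
    coeff (a + b) (f * g) = coeff a f * coeff b g := by
  classical
  have eq_zero_of_notMem {U : Set σ} {c : σ →₀ ℕ} (hc : (c.support : Set σ) ⊆ U) {i : σ}
      (hi : i ∉ U) : c i = 0 := Finsupp.notMem_support_iff.1 fun h => hi (hc h)
  rw [coeff_mul]
  refine Finset.sum_eq_single_of_mem (a, b) (by simp) ?_
  rintro ⟨x, y⟩ hxy hne
  by_contra hprod
  have hx := support_subset_of_mem_supported hf (left_ne_zero_of_mul hprod)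
  have hy := support_subset_of_mem_supported hg (right_ne_zero_of_mul hprod)
  replace hxy : x + y = a + b := Finset.HasAntidiagonal.mem_antidiagonal.1 hxy
  have hxa : x = a := by
    ext i
    by_cases hi : i ∈ S
    · have hiT : i ∉ T := hST.notMem_of_mem_left hi
      simpa [eq_zero_of_notMem hy hiT, eq_zero_of_notMem hb hiT] using DFunLike.congr_fun hxy i
    · rw [eq_zero_of_notMem hx hi, eq_zero_of_notMem ha hi]
  exact hne (Prod.ext hxa (add_left_cancel (hxa ▸ hxy)))

lemma degreeOf_aeval_le [Fintype σ] (f : σ → MvPolynomial τ R) (p : MvPolynomial σ R) (j : τ) :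
    degreeOf j (aeval f p) ≤ ∑ i, degreeOf i p * degreeOf j (f i) := by
  rw [aeval_def, eval₂_eq']
  refine (degreeOf_sum_le j _ _).trans (Finset.sup_le fun m hm => ?_)
  calc degreeOf j (C (coeff m p) * ∏ i, f i ^ m i)
      ≤ degreeOf j (∏ i, f i ^ m i) := degreeOf_C_mul_le _ _ _
    _ ≤ ∑ i, degreeOf j (f i ^ m i) := degreeOf_prod_le _ _ _
    _ ≤ ∑ i, degreeOf i p * degreeOf j (f i) := Finset.sum_le_sum fun i _ =>
        (degreeOf_pow_le _ _ _).trans (Nat.mul_le_mul_right _ (monomial_le_degreeOf i hm))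

end Supported

section Phi

variable {N : ℕ} {F : Matrix (Fin N) (Fin N) ℂ}

lemma Phi_X (F : Matrix (Fin N) (Fin N) ℂ) (i : Fin N) :
    Phi F (X i) = ∑ j, C (F i j) * X j :=
  aeval_X _ i

lemma Phi_X_mem_supported {S : Set (Fin N)} {i : Fin N} (hS : ∀ j, F i j ≠ 0 → j ∈ S) :
    Phi F (X i) ∈ supported ℂ S := by
  rw [Phi_X]
  refine sum_mem fun j _ => ?_
  by_cases hij : F i j = 0
  · simp [hij]
  · exact mul_mem ((supported ℂ S).algebraMap_mem _) (X_mem_supported.2 (hS j hij))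

lemma degreeOf_Phi_X_le_one (F : Matrix (Fin N) (Fin N) ℂ) (i j : Fin N) :
    degreeOf j (Phi F (X i)) ≤ 1 := by
  rw [Phi_X]
  refine (degreeOf_sum_le j _ _).trans (Finset.sup_le fun l _ => ?_)
  refine (degreeOf_C_mul_le _ _ _).trans ?_
  rw [degreeOf_X]
  split_ifs <;> omega

lemma degreeOf_Phi_X_eq_zero {i j : Fin N} (hij : F i j = 0) : degreeOf j (Phi F (X i)) = 0 := by
  have hsupp : Phi F (X i) ∈ supported ℂ {l | F i l ≠ 0} := Phi_X_mem_supported fun _ => id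
  by_contra hdeg
  exact mem_supported.1 hsupp (mem_vars_iff_degreeOf_ne_zero.2 hdeg) hij

lemma degreeOf_Phi_le {d : ℕ} {p : MvPolynomial (Fin N) ℂ} (hp : ∀ i, degreeOf i p ≤ d)
    (j : Fin N) : degreeOf j (Phi F p) ≤ {i | F i j ≠ 0}.ncard * d := by
  classical
  calc degreeOf j (Phi F p)
      ≤ ∑ i, degreeOf i p * degreeOf j (Phi F (X i)) := by
        simp only [Phi_X]
        exact degreeOf_aeval_le _ p j
    _ ≤ ∑ i, if F i j ≠ 0 then d else 0 := Finset.sum_le_sum fun i _ => by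
        split_ifs with hij
        · simpa using Nat.mul_le_mul (hp i) (degreeOf_Phi_X_le_one F i j)
        · rw [degreeOf_Phi_X_eq_zero (not_not.1 hij), mul_zero]
    _ = {i | F i j ≠ 0}.ncard * d := by
        rw [← Finset.sum_filter, Finset.sum_const, smul_eq_mul, Set.ncard_eq_toFinset_card',
          Set.toFinset_ofPred]

end Phi

section MovingTheCut

variable {N D k : ℕ} (q : MvPolynomial (Fin N) ℂ)

lemma cutMatrix_succ_apply (row : Fin (k + 1) → Fin (D + 1))
    (col : Fin (N - (k + 1)) → Fin (D + 1)) :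
    cutMatrix N D (k + 1) q row col =
      cutMatrix N D k q (fun t => row t.castSucc)
        (fun t => if h : (t : ℕ) = 0 then row (Fin.last k) else col ⟨t - 1, by omega⟩) := by
  unfold cutMatrix
  congr 2
  funext i
  rcases lt_trichotomy (i : ℕ) k with hi | hi | hi
  · simp [hi, hi.trans (Nat.lt_succ_self k)]
  · simp [hi, Fin.last]
  · simp [show ¬ (i : ℕ) < k by omega, show ¬ (i : ℕ) < k + 1 by omega,
      show (i : ℕ) - k ≠ 0 by omega, Nat.sub_add_eq]

lemma cutMatrix_apply_eq_succ (hk : k < N) (row : Fin k → Fin (D + 1))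
    (col : Fin (N - k) → Fin (D + 1)) :
    cutMatrix N D k q row col =
      cutMatrix N D (k + 1) q (Fin.snoc row (col ⟨0, by omega⟩))
        (fun t => col ⟨t + 1, by omega⟩) := by
  rw [cutMatrix_succ_apply]
  congr 1
  · simp
  · funext t
    split_ifs with ht
    · rw [Fin.snoc_last]
      congr 1
      exact Fin.ext ht
    · congr 1
      exact Fin.ext (Nat.succ_pred_eq_of_ne_zero ht).symm

lemma rank_cutMatrix_succ_le (D k : ℕ) :
    (cutMatrix N D (k + 1) q).rank ≤ (D + 1) * (cutMatrix N D k q).rank := by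
  simpa using matrix_rank_le_card_mul_rank_of_rowwise_submatrix (cutMatrix N D k q)
    (cutMatrix N D (k + 1) q)
    (fun row => row (Fin.last k)) (fun row t => row t.castSucc)
    (fun x col t => if h : (t : ℕ) = 0 then x else col ⟨t - 1, by omega⟩)
    (fun row col => cutMatrix_succ_apply q row col)

lemma rank_cutMatrix_le_succ (D : ℕ) (hk : k < N) :
    (cutMatrix N D k q).rank ≤ (D + 1) * (cutMatrix N D (k + 1) q).rank := by
  simpa [Matrix.rank_transpose] using
    matrix_rank_le_card_mul_rank_of_rowwise_submatrix (cutMatrix N D (k + 1) q).transpose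
      (cutMatrix N D k q).transpose (fun col => col ⟨0, by omega⟩)
      (fun col t => col ⟨t + 1, by omega⟩)
      (fun x row => Fin.snoc (α := fun _ => Fin (D + 1)) row x)
      (fun col row => cutMatrix_apply_eq_succ q hk row col)

end MovingTheCut

section CutPreservingMaps

variable {N D d j : ℕ}

/-- The exponent vector of the monomial in the variables before the cut at `j` which labels a row
of `cutMatrix N D j`. -/
noncomputable def rowExponent (N : ℕ) (row : Fin j → Fin (D + 1)) : Fin N →₀ ℕ :=
  Finsupp.equivFunOnFinite.symm fun i => if h : (i : ℕ) < j then (row ⟨i, h⟩ : ℕ) else 0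

/-- The exponent vector of the monomial in the variables after the cut at `j` which labels a column
of `cutMatrix N D j`. -/
noncomputable def colExponent (j : ℕ) (col : Fin (N - j) → Fin (D + 1)) : Fin N →₀ ℕ :=
  Finsupp.equivFunOnFinite.symm fun i =>
    if h : (i : ℕ) < j then 0 else (col ⟨(i : ℕ) - j, by omega⟩ : ℕ)

lemma cutMatrix_apply (q : MvPolynomial (Fin N) ℂ) (row : Fin j → Fin (D + 1))
    (col : Fin (N - j) → Fin (D + 1)) :
    cutMatrix N D j q row col = coeff (rowExponent N row + colExponent j col) q := by
  unfold cutMatrix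
  congr 1
  ext i
  by_cases hi : (i : ℕ) < j <;> simp [rowExponent, colExponent, hi]

lemma support_rowExponent_subset (row : Fin j → Fin (D + 1)) :
    ((rowExponent N row).support : Set (Fin N)) ⊆ {i | (i : ℕ) < j} := by
  intro i hi
  by_contra hij
  simp_all [rowExponent]

lemma support_colExponent_subset (col : Fin (N - j) → Fin (D + 1)) :
    ((colExponent j col).support : Set (Fin N)) ⊆ {i | (i : ℕ) < j}ᶜ := by
  intro i hi hij
  simp_all [colExponent]

lemma rowExponent_add_colExponent_injective (hj : j ≤ N) :
    Function.Injective fun rc : (Fin j → Fin (D + 1)) × (Fin (N - j) → Fin (D + 1)) =>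
      rowExponent N rc.1 + colExponent j rc.2 := by
  rintro ⟨row, col⟩ ⟨row', col'⟩ h
  refine Prod.ext (funext fun t => ?_) (funext fun t => ?_)
  · simpa [rowExponent, colExponent, Fin.ext_iff] using
      DFunLike.congr_fun h ⟨t, t.isLt.trans_le hj⟩
  · simpa [rowExponent, colExponent, Fin.ext_iff] using
      DFunLike.congr_fun h ⟨j + t, by omega⟩

lemma exists_rowExponent_add_colExponent_eq (hj : j ≤ N) {m : Fin N →₀ ℕ} (hm : ∀ i, m i ≤ D) :
    ∃ (row : Fin j → Fin (D + 1)) (col : Fin (N - j) → Fin (D + 1)),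
      rowExponent N row + colExponent j col = m := by
  refine ⟨fun t => ⟨m ⟨t, t.isLt.trans_le hj⟩, Nat.lt_succ_of_le (hm _)⟩,
    fun t => ⟨m ⟨j + t, by omega⟩, Nat.lt_succ_of_le (hm _)⟩, ?_⟩
  ext i
  by_cases hi : (i : ℕ) < j
  · simp [rowExponent, colExponent, hi]
  · simp [rowExponent, colExponent, hi, Nat.add_sub_cancel' (not_lt.1 hi)]

lemma sum_cutMatrix_smul_monomial (hj : j ≤ N) {p : MvPolynomial (Fin N) ℂ}
    (hp : ∀ m ∈ p.support, ∀ i, m i ≤ d) :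
    ∑ row, ∑ col, cutMatrix N d j p row col •
      (monomial (rowExponent N row) 1 * monomial (colExponent j col) 1) = p := by
  classical
  let E (rc : (Fin j → Fin (d + 1)) × (Fin (N - j) → Fin (d + 1))) : Fin N →₀ ℕ :=
    rowExponent N rc.1 + colExponent j rc.2
  have hE : p.support ⊆ Finset.univ.image E := fun m hm => by
    obtain ⟨row, col, h⟩ := exists_rowExponent_add_colExponent_eq hj (hp m hm)
    exact Finset.mem_image.2 ⟨(row, col), Finset.mem_univ _, h⟩
  calc ∑ row, ∑ col, cutMatrix N d j p row col •
        (monomial (rowExponent N row) 1 * monomial (colExponent j col) 1)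
      = ∑ rc, monomial (E rc) (coeff (E rc) p) := by
        simp [Fintype.sum_prod_type, cutMatrix_apply, monomial_mul, smul_monomial, E]
    _ = ∑ m ∈ Finset.univ.image E, monomial m (coeff m p) :=
        (Finset.sum_image (f := fun m => monomial m (coeff m p)) (g := E)
          (rowExponent_add_colExponent_injective hj).injOn).symm
    _ = ∑ m ∈ p.support, monomial m (coeff m p) :=
        (Finset.sum_subset hE fun m _ hm => by
          rw [notMem_support_iff.1 hm, monomial_zero]).symm
    _ = p := support_sum_monomial_coeff p

/-- The coefficients with which `φ` sends the row monomials of `cutMatrix N d j` to those of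
`cutMatrix N D j`. -/
noncomputable def cutRowMap (D d j : ℕ)
    (φ : MvPolynomial (Fin N) ℂ →ₐ[ℂ] MvPolynomial (Fin N) ℂ) :
    Matrix (Fin j → Fin (D + 1)) (Fin j → Fin (d + 1)) ℂ :=
  fun row k => coeff (rowExponent N row) (φ (monomial (rowExponent N k) 1))

/-- The coefficients with which `φ` sends the column monomials of `cutMatrix N d j` to those of
`cutMatrix N D j`. Its rows are indexed by the old monomials, since it multiplies on the right. -/
noncomputable def cutColMap (D d j : ℕ)
    (φ : MvPolynomial (Fin N) ℂ →ₐ[ℂ] MvPolynomial (Fin N) ℂ) :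
    Matrix (Fin (N - j) → Fin (d + 1)) (Fin (N - j) → Fin (D + 1)) ℂ :=
  fun l col => coeff (colExponent j col) (φ (monomial (colExponent j l) 1))

lemma cutMatrix_algHom_eq_mul_mul (D : ℕ) (hj : j ≤ N)
    (φ : MvPolynomial (Fin N) ℂ →ₐ[ℂ] MvPolynomial (Fin N) ℂ)
    (hleft : ∀ i : Fin N, (i : ℕ) < j → φ (X i) ∈ supported ℂ {i : Fin N | (i : ℕ) < j})
    (hright : ∀ i : Fin N, ¬ (i : ℕ) < j → φ (X i) ∈ supported ℂ {i : Fin N | (i : ℕ) < j}ᶜ)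
    {p : MvPolynomial (Fin N) ℂ} (hp : ∀ m ∈ p.support, ∀ i, m i ≤ d) :
    cutMatrix N D j (φ p) =
      cutRowMap D d j φ * cutMatrix N d j p * cutColMap D d j φ := by
  ext row col
  have hcoeff (k : Fin j → Fin (d + 1)) (l : Fin (N - j) → Fin (d + 1)) :
      coeff (rowExponent N row + colExponent j col)
          (φ (monomial (rowExponent N k) 1) * φ (monomial (colExponent j l) 1)) =
        coeff (rowExponent N row) (φ (monomial (rowExponent N k) 1)) *
          coeff (colExponent j col) (φ (monomial (colExponent j l) 1)) :=
    coeff_add_mul_of_mem_supported disjoint_compl_right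
      (algHom_mem_supported φ hleft (monomial_mem_supported (support_rowExponent_subset k) 1))
      (algHom_mem_supported φ hright (monomial_mem_supported (support_colExponent_subset l) 1))
      (support_rowExponent_subset row) (support_colExponent_subset col)
  rw [cutMatrix_apply]
  conv_lhs => rw [← sum_cutMatrix_smul_monomial hj hp]
  simp only [map_sum, map_smul, map_mul, coeff_sum, coeff_smul, hcoeff, Matrix.mul_apply,
    cutRowMap, cutColMap, Finset.sum_mul, smul_eq_mul]
  rw [Finset.sum_comm]
  exact Finset.sum_congr rfl fun l _ => Finset.sum_congr rfl fun k _ => by ring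

/-- The matrix `F` has no nonzero entry linking an index before the cut at `j` to one after it,
i.e. `F` is block diagonal with respect to the cut. -/
def RespectsCut (j : ℕ) (F : Matrix (Fin N) (Fin N) ℂ) : Prop :=
  ∀ i l, F i l ≠ 0 → ((i : ℕ) < j ↔ (l : ℕ) < j)

lemma RespectsCut.rank_cutMatrix_Phi_le {F : Matrix (Fin N) (Fin N) ℂ} (hF : RespectsCut j F)
    (D : ℕ) (hj : j ≤ N) {p : MvPolynomial (Fin N) ℂ} (hp : ∀ m ∈ p.support, ∀ i, m i ≤ d) :
    (cutMatrix N D j (Phi F p)).rank ≤ (cutMatrix N d j p).rank := by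
  rw [cutMatrix_algHom_eq_mul_mul D hj (Phi F)
    (fun i hi => Phi_X_mem_supported fun l hl => (hF i l hl).1 hi)
    (fun i hi => Phi_X_mem_supported fun l hl => mt (hF i l hl).2 hi) hp]
  exact (Matrix.rank_mul_le_left _ _).trans (Matrix.rank_mul_le_right _ _)

end CutPreservingMaps

section Gate

variable {N d s : ℕ} {F : Matrix (Fin N) (Fin N) ℂ}

/-- The matrix `F` agrees with the identity outside the block of rows and columns `s, s + 1`. -/
def IsTwoSiteGate (s : ℕ) (F : Matrix (Fin N) (Fin N) ℂ) : Prop :=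
  ∀ i j : Fin N, ¬(((i : ℕ) = s ∨ (i : ℕ) = s + 1) ∧ ((j : ℕ) = s ∨ (j : ℕ) = s + 1)) →
    F i j = if i = j then 1 else 0

lemma IsTwoSiteGate.eq_or_mem_sites (hF : IsTwoSiteGate s F) {i j : Fin N} (hij : F i j ≠ 0) :
    i = j ∨ ((i : ℕ) = s ∨ (i : ℕ) = s + 1) ∧ ((j : ℕ) = s ∨ (j : ℕ) = s + 1) := by
  by_contra! h
  exact hij ((hF i j (by tauto)).trans (if_neg h.1))

lemma IsTwoSiteGate.respectsCut (hF : IsTwoSiteGate s F) {k : ℕ} (hk : k ≠ s + 1) :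
    RespectsCut k F := by
  intro i j hij
  rcases hF.eq_or_mem_sites hij with rfl | h
  · rfl
  · omega

lemma IsTwoSiteGate.ncard_column_support_le_two (hF : IsTwoSiteGate s F) (j : Fin N) :
    {i | F i j ≠ 0}.ncard ≤ 2 := by
  by_cases hj : (j : ℕ) = s ∨ (j : ℕ) = s + 1
  · have hsub : Fin.val '' {i | F i j ≠ 0} ⊆ {s, s + 1} := by
      rintro _ ⟨i, hij, rfl⟩
      rcases hF.eq_or_mem_sites hij with rfl | h
      exacts [hj, h.1]
    rw [← Set.ncard_image_of_injective _ Fin.val_injective]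
    exact (Set.ncard_le_ncard hsub).trans ((Set.ncard_insert_le _ _).trans (by simp))
  · have hsub : {i | F i j ≠ 0} ⊆ {j} := fun i hij =>
      (hF.eq_or_mem_sites hij).resolve_right fun h => hj h.2
    exact (Set.ncard_le_ncard hsub).trans (by simp)

end Gate

theorem two_site_gate_rank_bound_general {N d r s : ℕ} (hsN : s + 1 < N)
    {p : MvPolynomial (Fin N) ℂ} (hp : ∀ m ∈ p.support, ∀ i, m i ≤ d)
    {F : Matrix (Fin N) (Fin N) ℂ} (hleft : RespectsCut s F) (hright : RespectsCut (s + 2) F)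
    (hcol : ∀ j, {i | F i j ≠ 0}.ncard ≤ r) :
    (∀ m ∈ (Phi F p).support, ∀ i, m i ≤ r * d) ∧
      (cutMatrix N (r * d) (s + 1) (Phi F p)).rank ≤
        (r * d + 1) * min (cutMatrix N d s p).rank (cutMatrix N d (s + 2) p).rank := by
  refine ⟨fun m hm i => ?_, ?_⟩
  · have hdeg (l : Fin N) : degreeOf l p ≤ d := degreeOf_le_iff.2 fun m hm => hp m hm l
    exact (monomial_le_degreeOf i hm).trans
      ((degreeOf_Phi_le hdeg i).trans (Nat.mul_le_mul_right d (hcol i)))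
  · rw [← Nat.mul_min_mul_left]
    exact le_min
      ((rank_cutMatrix_succ_le _ _ _).trans
        (Nat.mul_le_mul_left _ (hleft.rank_cutMatrix_Phi_le _ (by omega) hp)))
      ((rank_cutMatrix_le_succ _ _ hsN).trans
        (Nat.mul_le_mul_left _ (hright.rank_cutMatrix_Phi_le _ hsN hp)))

/-- Applying a two-site gate on the (0-based) sites `s, s+1` to a polynomial whose
variable exponents are bounded by `d` yields exponents bounded by `2d`, and
increases the Schmidt rank across the cut between `s` and `s+1` to at most the new
local dimension `2d+1` times the smaller of the Schmidt ranks at the two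
neighboring cuts. -/
theorem two_site_gate_rank_bound (N d s : ℕ) (hs : 1 ≤ s) (hsN : s + 1 < N)
    (p : MvPolynomial (Fin N) ℂ) (hp : ∀ m ∈ p.support, ∀ i, m i ≤ d)
    (F : Matrix (Fin N) (Fin N) ℂ)
    (hFid : ∀ i j : Fin N,
      ¬(((i : ℕ) = s ∨ (i : ℕ) = s + 1) ∧ ((j : ℕ) = s ∨ (j : ℕ) = s + 1)) →
      F i j = if i = j then 1 else 0) :
    (∀ m ∈ (Phi F p).support, ∀ i, m i ≤ 2 * d) ∧
      (cutMatrix N (2 * d) (s + 1) (Phi F p)).rank ≤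
        (2 * d + 1) * min (cutMatrix N d s p).rank (cutMatrix N d (s + 2) p).rank := by
  have hF : IsTwoSiteGate s F := hFid
  exact two_site_gate_rank_bound_general hsN hp (hF.respectsCut (by omega))
    (hF.respectsCut (by omega)) hF.ncard_column_support_le_two
end
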